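/- arXiv:2302.14559 — 3 statements merged into one kernel-verified Lean document; each statement's English description precedes it below -/
import Mathlib

section
/- Let α = (α₁,…,α_d) ∈ ℝ^d be an irrational vector and assume there exist constants H > 0 and σ ≥ d such that ‖α·m‖ ≥ H|m|^{−σ} for every m ∈ ℤ^d \ {0}. Let ϑ > 0. Then there exists a constant c > 0 such that for every R ≥ 1: ∑_{0<|m|<R} ‖α·m‖^{−ϑ} ≤ cR^{ϑσ+d(1−ϑ)} if 0 < ϑ < 1; ∑_{0<|m|<R} ‖α·m‖^{−ϑ} ≤ cR^{σ} log(R) if ϑ = 1 (with log interpreted as log(1+R)); and ∑_{0<|m|<R} ‖α·m‖^{−ϑ} ≤ cR^{ϑσ} if ϑ > 1. The sums run over m ∈ ℤ^d with 0 < |m| < R. -/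
open MeasureTheory Filter Finset
open scoped Real ENNReal Topology BigOperators

noncomputable section

/-- Distance from a real number to the nearest integer. -/
def dnint (t : ℝ) : ℝ := |t - (round t : ℝ)|

/-- Euclidean norm of an integer vector. -/
def znorm {d : ℕ} (m : Fin d → ℤ) : ℝ := Real.sqrt (∑ i, ((m i : ℝ)) ^ 2)

/-- A function on `ℝ^d` which is `ℤ^d`-periodic (i.e. a function on the torus `𝕋^d`). -/
def ZdPeriodic {d : ℕ} (f : (Fin d → ℝ) → ℂ) : Prop :=
  ∀ (x : Fin d → ℝ) (k : Fin d → ℤ), f (x + fun i => (k i : ℝ)) = f x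

/-- The unit cube, a fundamental domain of the torus `𝕋^d`. -/
def cube (d : ℕ) : Set (Fin d → ℝ) := Set.Icc 0 1

/-- Fourier coefficient of a (periodic) function. -/
def fcoef {d : ℕ} (f : (Fin d → ℝ) → ℂ) (m : Fin d → ℤ) : ℂ :=
  ∫ x in cube d,
    f x * Complex.exp (-(2 * Real.pi * Complex.I * ((∑ i, (m i : ℝ) * x i : ℝ) : ℂ)))

/-- Membership in the Sobolev space `W^{δ,2}(𝕋^d)`. -/
def MemSobolev {d : ℕ} (δ : ℝ) (f : (Fin d → ℝ) → ℂ) : Prop :=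
  Summable (fun m : Fin d → ℤ => (1 + znorm m ^ 2) ^ δ * ‖fcoef f m‖ ^ 2)

/-- The Sobolev norm `‖f‖_{δ,2}`. -/
def sobNorm {d : ℕ} (δ : ℝ) (f : (Fin d → ℝ) → ℂ) : ℝ :=
  Real.sqrt (∑' m : Fin d → ℤ, (1 + znorm m ^ 2) ^ δ * ‖fcoef f m‖ ^ 2)

/-- The kernel `∑_{n ∈ ℤ} Φ(N,n) e^{2πint}` of the summation method. -/
def kern (Φ : ℕ → ℤ → ℂ) (N : ℕ) (t : ℝ) : ℂ :=
  ∑' n : ℤ, Φ N n * Complex.exp (2 * Real.pi * Complex.I * (n : ℂ) * (t : ℂ))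

/-- The weighted discrepancy `D_N^{Φ,α} f(x)`. -/
def disc {d : ℕ} (Φ : ℕ → ℤ → ℂ) (α : Fin d → ℝ) (f : (Fin d → ℝ) → ℂ)
    (N : ℕ) (x : Fin d → ℝ) : ℂ :=
  (∑' n : ℤ, Φ N n * f (x + n • α)) - ∫ y in cube d, f y

/-- `α ∈ ℝ^d` is an irrational vector: `1, α₁, …, α_d` are linearly independent over `ℚ`. -/
def IrrationalVec {d : ℕ} (α : Fin d → ℝ) : Prop :=
  ∀ (m : Fin d → ℤ) (k : ℤ), (∑ i, (m i : ℝ) * α i) + (k : ℝ) = 0 → m = 0 ∧ k = 0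

theorem aux_natAbs_sum (K : Finset ℤ) (hK : (0 : ℤ) ∉ K) (T : ℕ) (g : ℕ → ℝ)
    (hg : ∀ n, 0 ≤ g n) (hT : ∀ k ∈ K, k.natAbs ≤ T) :
    ∑ k ∈ K, g k.natAbs ≤ 2 * ∑ j ∈ Finset.Icc 1 T, g j := by
  classical
  have hmaps : ∀ k ∈ K, k.natAbs ∈ Finset.Icc 1 T := by
    intro k hk
    have h0 : k ≠ 0 := fun h => hK (h ▸ hk)
    have := hT k hk
    rw [Finset.mem_Icc]
    omega
  rw [← Finset.sum_fiberwise_of_maps_to hmaps, Finset.mul_sum]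
  refine Finset.sum_le_sum fun j _ => ?_
  have h1 : ∑ k ∈ K with k.natAbs = j, g k.natAbs = ∑ k ∈ K with k.natAbs = j, g j := by
    refine Finset.sum_congr rfl fun k hk => ?_
    rw [(Finset.mem_filter.1 hk).2]
  rw [h1, Finset.sum_const, nsmul_eq_mul]
  have hsub : (K.filter fun k => k.natAbs = j) ⊆ {(j : ℤ), -(j : ℤ)} := by
    intro k hk
    have := (Finset.mem_filter.1 hk).2
    simp only [Finset.mem_insert, Finset.mem_singleton]
    omega
  have hc : (K.filter fun k => k.natAbs = j).card ≤ 2 :=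
    (Finset.card_le_card hsub).trans Finset.card_le_two
  have : ((K.filter fun k => k.natAbs = j).card : ℝ) ≤ 2 := by exact_mod_cast hc
  exact mul_le_mul_of_nonneg_right this (hg j)

theorem aux_split (K : Finset ℤ) (hK : (0 : ℤ) ∉ K) (T : ℕ) (hT : 1 ≤ T) (θ : ℝ) (hθ : 0 < θ) :
    ∑ k ∈ K, (k.natAbs : ℝ) ^ (-θ) ≤
      2 * ∑ j ∈ Finset.Icc 1 T, (j : ℝ) ^ (-θ) + K.card * (T : ℝ) ^ (-θ) := by
  classical
  rw [← Finset.sum_filter_add_sum_filter_not K (fun k => k.natAbs ≤ T)]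
  refine add_le_add ?_ ?_
  · refine aux_natAbs_sum _ ?_ T (fun n => (n : ℝ) ^ (-θ)) (fun n => by positivity) ?_
    · simp [hK]
    · intro k hk
      exact (Finset.mem_filter.1 hk).2
  · have h : ∀ k ∈ K.filter (fun k => ¬ k.natAbs ≤ T), (k.natAbs : ℝ) ^ (-θ) ≤ (T : ℝ) ^ (-θ) := by
      intro k hk
      have hk' := (Finset.mem_filter.1 hk).2
      refine Real.rpow_le_rpow_of_nonpos (by exact_mod_cast hT) ?_ (by linarith)
      exact_mod_cast (not_le.1 hk').le
    refine (Finset.sum_le_card_nsmul _ _ _ h).trans ?_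
    rw [nsmul_eq_mul]
    refine mul_le_mul_of_nonneg_right ?_ (by positivity)
    exact_mod_cast Finset.card_filter_le _ _

theorem aux_sum_lt_one (θ : ℝ) (h0 : 0 < θ) (h1 : θ < 1) (T : ℕ) :
    ∑ j ∈ Finset.Icc 1 T, (j : ℝ) ^ (-θ) ≤ (T : ℝ) ^ (1 - θ) / (1 - θ) := by
  have hp : 0 < 1 - θ := by linarith
  induction T with
  | zero => simp [Real.zero_rpow hp.ne']
  | succ n ih =>
    rw [Finset.sum_Icc_succ_top (by omega)]
    have hx : (0 : ℝ) < ((n + 1 : ℕ) : ℝ) := by positivity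
    set x : ℝ := ((n + 1 : ℕ) : ℝ) with hxdef
    have hn : (n : ℝ) = x * (1 + (-(1 / x))) := by
      field_simp
      rw [hxdef]; push_cast; ring
    have hx1 : 1 ≤ x := by rw [hxdef]; push_cast; linarith [(Nat.cast_nonneg n : (0 : ℝ) ≤ n)]
    have hinv : 1 / x ≤ 1 := by rw [div_le_one hx]; exact hx1
    have hb : (1 + (-(1 / x))) ^ (1 - θ) ≤ 1 + (1 - θ) * (-(1 / x)) :=
      rpow_one_add_le_one_add_mul_self (by linarith) hp.le (by linarith)
    have hxe : x ^ (-θ) = x ^ (1 - θ) * (1 / x) := by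
      rw [show -θ = (1 - θ) - 1 by ring, Real.rpow_sub_one hx.ne']; ring
    have hn2 : (n : ℝ) ^ (1 - θ) ≤ x ^ (1 - θ) - (1 - θ) * x ^ (-θ) := by
      rw [hn, Real.mul_rpow hx.le (by linarith), hxe]
      have := mul_le_mul_of_nonneg_left hb (Real.rpow_nonneg hx.le (1 - θ))
      linarith
    rw [le_div_iff₀ hp] at ih ⊢
    nlinarith

theorem aux_sum_one (T : ℕ) :
    ∑ j ∈ Finset.Icc 1 T, (j : ℝ) ^ (-(1 : ℝ)) ≤ 1 + Real.log T := by
  have h := harmonic_le_one_add_log T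
  rw [harmonic_eq_sum_Icc] at h
  push_cast at h
  simpa [Real.rpow_neg_one] using h

theorem aux_main (d : ℕ) (α : Fin d → ℝ)
    (H σ : ℝ) (hH : 0 < H) (hσ : (d : ℝ) ≤ σ)
    (hdio : ∀ m : Fin d → ℤ, m ≠ 0 →
      H * znorm m ^ (-σ) ≤ dnint (∑ i, (m i : ℝ) * α i))
    (ϑ : ℝ) (hϑ : 0 < ϑ) (R : ℝ) (hR : 1 ≤ R) :
    ∃ K : Finset ℤ, (0 : ℤ) ∉ K ∧ (K.card : ℝ) ≤ (3 * R) ^ d ∧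
      (∑' m : Fin d → ℤ, Set.indicator {m : Fin d → ℤ | m ≠ 0 ∧ znorm m < R}
            (fun m => dnint (∑ i, (m i : ℝ) * α i) ^ (-ϑ)) m)
        ≤ (H * 2 ^ (-σ) / 2) ^ (-ϑ) * R ^ (ϑ * σ) * ∑ k ∈ K, (k.natAbs : ℝ) ^ (-ϑ) := by
  classical
  have hσ0 : 0 ≤ σ := le_trans (Nat.cast_nonneg d) hσ
  have hR0 : 0 < R := by linarith
  set B : Finset (Fin d → ℤ) := Fintype.piFinset (fun _ : Fin d => Finset.Icc (-⌊R⌋) ⌊R⌋) with hB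
  set S : Finset (Fin d → ℤ) := B.filter (fun m => m ≠ 0 ∧ znorm m < R) with hS
  have hmemB : ∀ m : Fin d → ℤ, znorm m < R → m ∈ B := by
    intro m hm
    rw [hB, Fintype.mem_piFinset]
    intro i
    have h1 : |(m i : ℝ)| ≤ znorm m := by
      rw [← Real.sqrt_sq_eq_abs]
      exact Real.sqrt_le_sqrt
        (Finset.single_le_sum (f := fun i => (m i : ℝ) ^ 2) (fun j _ => sq_nonneg _) (Finset.mem_univ i))
    have h2 := abs_le.1 (h1.trans hm.le)
    have h3 : m i ≤ ⌊R⌋ := Int.le_floor.2 h2.2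
    have h4 : -m i ≤ ⌊R⌋ := Int.le_floor.2 (by push_cast; linarith)
    rw [Finset.mem_Icc]
    omega
  have hBcard : (B.card : ℝ) ≤ (3 * R) ^ d := by
    rw [hB, Fintype.card_piFinset]
    simp only [Finset.prod_const, Finset.card_univ, Fintype.card_fin, Int.card_Icc]
    push_cast
    refine pow_le_pow_left₀ (by positivity) ?_ d
    have hfl : 0 ≤ ⌊R⌋ := Int.floor_nonneg.2 hR0.le
    have : (((⌊R⌋ + 1 - -⌊R⌋).toNat : ℤ) : ℝ) = 2 * (⌊R⌋ : ℝ) + 1 := by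
      rw [Int.toNat_of_nonneg (by omega)]; push_cast; ring
    have h' : (((⌊R⌋ + 1 - -⌊R⌋).toNat : ℕ) : ℝ) = 2 * (⌊R⌋ : ℝ) + 1 := by exact_mod_cast this
    rw [h']
    linarith [Int.floor_le R]
  have htsum : (∑' m : Fin d → ℤ, Set.indicator {m : Fin d → ℤ | m ≠ 0 ∧ znorm m < R}
            (fun m => dnint (∑ i, (m i : ℝ) * α i) ^ (-ϑ)) m)
      = ∑ m ∈ S, dnint (∑ i, (m i : ℝ) * α i) ^ (-ϑ) := by
    rw [tsum_eq_sum (s := S)]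
    · refine Finset.sum_congr rfl fun m hm => ?_
      have hm' : m ∈ {m : Fin d → ℤ | m ≠ 0 ∧ znorm m < R} := (Finset.mem_filter.1 hm).2
      rw [Set.indicator_of_mem hm']
    · intro m hm
      refine Set.indicator_of_notMem (fun h => hm ?_) _
      exact Finset.mem_filter.2 ⟨hmemB m h.2, h⟩
  set δ : ℝ := H * (2 * R) ^ (-σ) with hδ
  have hδ0 : 0 < δ := by positivity
  have hkey : ∀ m : Fin d → ℤ, m ≠ 0 → znorm m ≤ 2 * R →
      δ ≤ dnint (∑ i, (m i : ℝ) * α i) := by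
    intro m hm hle
    refine le_trans ?_ (hdio m hm)
    refine mul_le_mul_of_nonneg_left ?_ hH.le
    refine Real.rpow_le_rpow_of_nonpos ?_ hle (by linarith)
    obtain ⟨i, hi⟩ := Function.ne_iff.1 hm
    have hi' : (m i : ℝ) ≠ 0 := by exact_mod_cast hi
    have hpos : 0 < ∑ i, (m i : ℝ) ^ 2 :=
      Finset.sum_pos' (fun j _ => sq_nonneg _) ⟨i, Finset.mem_univ i, by positivity⟩
    exact Real.sqrt_pos.2 hpos
  let t : (Fin d → ℤ) → ℝ := fun m => ∑ i, (m i : ℝ) * α i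
  let s : (Fin d → ℤ) → ℝ := fun m => t m - (round (t m) : ℝ)
  let κ : (Fin d → ℤ) → ℤ := fun m => ⌊s m / δ⌋
  have hsep : ∀ m ∈ S, ∀ m' ∈ S, m ≠ m' → δ ≤ |s m - s m'| := by
    intro m hm m' hm' hne
    have h1 := (Finset.mem_filter.1 hm).2.2
    have h2 := (Finset.mem_filter.1 hm').2.2
    have hz : znorm (m - m') ≤ 2 * R := by
      have e1 := (Real.sqrt_lt' hR0).1 h1
      have e2 := (Real.sqrt_lt' hR0).1 h2
      refine Real.sqrt_le_iff.2 ⟨by positivity, ?_⟩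
      calc ∑ i, (((m - m') i : ℤ) : ℝ) ^ 2
          ≤ ∑ i, (2 * (m i : ℝ) ^ 2 + 2 * (m' i : ℝ) ^ 2) := by
            refine Finset.sum_le_sum fun i _ => ?_
            simp only [Pi.sub_apply, Int.cast_sub]
            nlinarith [sq_nonneg ((m i : ℝ) + m' i)]
        _ = 2 * ∑ i, (m i : ℝ) ^ 2 + 2 * ∑ i, (m' i : ℝ) ^ 2 := by
            rw [Finset.sum_add_distrib, Finset.mul_sum, Finset.mul_sum]
        _ ≤ (2 * R) ^ 2 := by nlinarith
    refine (hkey _ (sub_ne_zero.2 hne) hz).trans ?_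
    have ht : (∑ i, (((m - m') i : ℤ) : ℝ) * α i) = t m - t m' := by
      simp only [t, Pi.sub_apply, Int.cast_sub, sub_mul, Finset.sum_sub_distrib]
    rw [ht]
    have := round_le (t m - t m') (round (t m) - round (t m'))
    refine this.trans (le_of_eq ?_)
    congr 1
    simp only [s]
    push_cast
    ring
  have hinj : Set.InjOn κ S := by
    intro m hm m' hm' he
    by_contra hne
    have h1 := hsep m hm m' hm' hne
    have h2 := Int.abs_sub_lt_one_of_floor_eq_floor he
    rw [← sub_div, abs_div, abs_of_pos hδ0, div_lt_one hδ0] at h2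
    linarith
  have hbig : ∀ m ∈ S, δ ≤ |s m| := by
    intro m hm
    have h1 := (Finset.mem_filter.1 hm).2
    exact hkey m h1.1 (by linarith [h1.2])
  have hκ : ∀ m ∈ S, κ m ≠ 0 ∧ δ / 2 * ((κ m).natAbs : ℝ) ≤ |s m| := by
    intro m hm
    have h1 := hbig m hm
    have hf1 : (κ m : ℝ) ≤ s m / δ := Int.floor_le _
    have hf2 : s m / δ < κ m + 1 := Int.lt_floor_add_one _
    rw [le_div_iff₀ hδ0] at hf1
    rw [div_lt_iff₀ hδ0] at hf2
    have hna : ((κ m).natAbs : ℝ) = |(κ m : ℝ)| := by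
      rw [Nat.cast_natAbs, Int.cast_abs]
    rw [hna]
    rcases le_total 0 (s m) with h | h
    · rw [abs_of_nonneg h] at h1 ⊢
      have hpos : 1 ≤ κ m := by
        rw [Int.le_floor]; push_cast; rw [le_div_iff₀ hδ0]; linarith
      have hpos' : (1 : ℝ) ≤ κ m := by exact_mod_cast hpos
      refine ⟨by omega, ?_⟩
      rw [abs_of_nonneg (by linarith)]
      nlinarith
    · rw [abs_of_nonpos h] at h1 ⊢
      have hneg' : (κ m : ℝ) ≤ -1 := by
        by_contra hc
        push Not at hc
        nlinarith
      refine ⟨?_, ?_⟩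
      · intro h0
        rw [h0] at hneg'
        norm_num at hneg'
      · rw [abs_of_nonpos (by linarith)]
        nlinarith
  refine ⟨S.image κ, ?_, ?_, ?_⟩
  · intro h
    obtain ⟨m, hm, h0⟩ := Finset.mem_image.1 h
    exact (hκ m hm).1 h0
  · refine le_trans ?_ hBcard
    exact_mod_cast Finset.card_image_le.trans (Finset.card_filter_le _ _)
  · rw [htsum, Finset.sum_image hinj, Finset.mul_sum]
    have hC : (H * 2 ^ (-σ) / 2) ^ (-ϑ) * R ^ (ϑ * σ) = (δ / 2) ^ (-ϑ) := by
      rw [hδ, Real.mul_rpow (by norm_num) hR0.le,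
        show H * (2 ^ (-σ) * R ^ (-σ)) / 2 = (H * 2 ^ (-σ) / 2) * R ^ (-σ) by ring,
        Real.mul_rpow (by positivity) (by positivity), ← Real.rpow_mul hR0.le]
      congr 2
      ring
    rw [hC]
    refine Finset.sum_le_sum fun m hm => ?_
    obtain ⟨hk0, hk⟩ := hκ m hm
    have hn : (0 : ℝ) < ((κ m).natAbs : ℝ) := by
      exact_mod_cast Int.natAbs_pos.2 hk0
    rw [← Real.mul_rpow (by positivity) hn.le]
    exact Real.rpow_le_rpow_of_nonpos (by positivity) hk (by linarith)

/-- Lemma 2.2: estimates of `∑_{0<|m|<R} ‖α·m‖^{-ϑ}` under a Diophantine condition. -/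
theorem stmt_13 (d : ℕ) (hd : 0 < d) (α : Fin d → ℝ) (hirr : IrrationalVec α)
    (H σ : ℝ) (hH : 0 < H) (hσ : (d : ℝ) ≤ σ)
    (hdio : ∀ m : Fin d → ℤ, m ≠ 0 →
      H * znorm m ^ (-σ) ≤ dnint (∑ i, (m i : ℝ) * α i))
    (ϑ : ℝ) (hϑ : 0 < ϑ) :
    ∃ c : ℝ, 0 < c ∧ ∀ R : ℝ, 1 ≤ R →
      (ϑ < 1 →
        (∑' m : Fin d → ℤ, Set.indicator {m : Fin d → ℤ | m ≠ 0 ∧ znorm m < R}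
            (fun m => dnint (∑ i, (m i : ℝ) * α i) ^ (-ϑ)) m)
          ≤ c * R ^ (ϑ * σ + d * (1 - ϑ))) ∧
      (ϑ = 1 →
        (∑' m : Fin d → ℤ, Set.indicator {m : Fin d → ℤ | m ≠ 0 ∧ znorm m < R}
            (fun m => dnint (∑ i, (m i : ℝ) * α i) ^ (-ϑ)) m)
          ≤ c * R ^ σ * Real.log (1 + R)) ∧
      (1 < ϑ →
        (∑' m : Fin d → ℤ, Set.indicator {m : Fin d → ℤ | m ≠ 0 ∧ znorm m < R}
            (fun m => dnint (∑ i, (m i : ℝ) * α i) ^ (-ϑ)) m)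
          ≤ c * R ^ (ϑ * σ)) := by
  set A : ℝ := (H * 2 ^ (-σ) / 2) ^ (-ϑ) with hA
  have hA0 : 0 < A := by positivity
  rcases lt_trichotomy ϑ 1 with h1 | h1 | h1
  · refine ⟨A * (2 / (1 - ϑ) + 3 ^ d * 2 ^ ϑ), ?_, fun R hR => ⟨fun _ => ?_, fun h => absurd h h1.ne,
      fun h => absurd h h1.not_gt⟩⟩
    · have : 0 < 1 - ϑ := by linarith
      positivity
    have hp : 0 < 1 - ϑ := by linarith
    have hR0 : 0 < R := by linarith
    obtain ⟨K, hK0, hKc, hle⟩ := aux_main d α H σ hH hσ hdio ϑ hϑ R hR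
    refine hle.trans ?_
    have hRd : 1 ≤ R ^ d := one_le_pow₀ hR
    set T : ℕ := ⌊R ^ d⌋₊ with hT
    have hT1 : 1 ≤ T := Nat.one_le_floor_iff _ |>.2 hRd
    have hT1' : (1 : ℝ) ≤ T := by exact_mod_cast hT1
    have hTle : (T : ℝ) ≤ R ^ d := Nat.floor_le (by positivity)
    have hTge : R ^ d / 2 ≤ T := by
      have := Nat.lt_floor_add_one (R ^ d)
      rw [← hT] at this
      linarith
    have hs := aux_split K hK0 T hT1 ϑ hϑ
    have hs1 := aux_sum_lt_one ϑ hϑ h1 T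
    have hs2 : (T : ℝ) ^ (1 - ϑ) / (1 - ϑ) ≤ (R ^ d) ^ (1 - ϑ) / (1 - ϑ) := by
      gcongr
    have hs3 : (K.card : ℝ) * (T : ℝ) ^ (-ϑ) ≤ 3 ^ d * 2 ^ ϑ * (R ^ d) ^ (1 - ϑ) := by
      calc (K.card : ℝ) * (T : ℝ) ^ (-ϑ) ≤ (3 * R) ^ d * (R ^ d / 2) ^ (-ϑ) := by
            refine mul_le_mul hKc ?_ (by positivity) (by positivity)
            exact Real.rpow_le_rpow_of_nonpos (by positivity) hTge (by linarith)
        _ = 3 ^ d * 2 ^ ϑ * (R ^ d) ^ (1 - ϑ) := by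
            rw [Real.div_rpow (by positivity) (by norm_num), Real.rpow_neg (by norm_num : (0:ℝ) ≤ 2),
              mul_pow, div_inv_eq_mul, show (1 - ϑ) = 1 + (-ϑ) by ring,
              Real.rpow_add (by positivity), Real.rpow_one]
            ring
    have he : R ^ (ϑ * σ + d * (1 - ϑ)) = R ^ (ϑ * σ) * (R ^ d) ^ (1 - ϑ) := by
      rw [Real.rpow_add hR0, Real.rpow_mul hR0.le (d : ℝ), Real.rpow_natCast]
    rw [he]
    have htot : ∑ k ∈ K, (k.natAbs : ℝ) ^ (-ϑ) ≤
        (2 / (1 - ϑ) + 3 ^ d * 2 ^ ϑ) * (R ^ d) ^ (1 - ϑ) := by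
      calc _ ≤ 2 * ((R ^ d) ^ (1 - ϑ) / (1 - ϑ)) + 3 ^ d * 2 ^ ϑ * (R ^ d) ^ (1 - ϑ) := by linarith
        _ = _ := by ring
    calc A * R ^ (ϑ * σ) * ∑ k ∈ K, (k.natAbs : ℝ) ^ (-ϑ)
        ≤ A * R ^ (ϑ * σ) * ((2 / (1 - ϑ) + 3 ^ d * 2 ^ ϑ) * (R ^ d) ^ (1 - ϑ)) := by gcongr
      _ = _ := by ring
  · have hl2 : 0 < Real.log 2 := Real.log_pos (by norm_num)
    refine ⟨A * ((2 + 3 ^ d * 2) / Real.log 2 + 2 * d), by positivity, fun R hR =>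
      ⟨fun h => absurd h1 h.ne, fun _ => ?_, fun h => absurd h1 h.ne'⟩⟩
    have hR0 : 0 < R := by linarith
    obtain ⟨K, hK0, hKc, hle⟩ := aux_main d α H σ hH hσ hdio ϑ hϑ R hR
    refine hle.trans ?_
    have hRd : 1 ≤ R ^ d := one_le_pow₀ hR
    set T : ℕ := ⌊R ^ d⌋₊ with hT
    have hT1 : 1 ≤ T := Nat.one_le_floor_iff _ |>.2 hRd
    have hT1' : (1 : ℝ) ≤ T := by exact_mod_cast hT1
    have hTle : (T : ℝ) ≤ R ^ d := Nat.floor_le (by positivity)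
    have hTge : R ^ d / 2 ≤ T := by
      have := Nat.lt_floor_add_one (R ^ d)
      rw [← hT] at this
      linarith
    have hs := aux_split K hK0 T hT1 ϑ hϑ
    have hs1 := aux_sum_one T
    have hlog : Real.log T ≤ d * Real.log (1 + R) := by
      calc Real.log T ≤ Real.log (R ^ d) := Real.log_le_log (by linarith) hTle
        _ = d * Real.log R := Real.log_pow _ _
        _ ≤ _ := by gcongr; linarith
    have hlog2 : Real.log 2 ≤ Real.log (1 + R) := Real.log_le_log (by norm_num) (by linarith)
    have hs3 : (K.card : ℝ) * (T : ℝ) ^ (-(1 : ℝ)) ≤ 3 ^ d * 2 := by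
      rw [Real.rpow_neg_one, ← div_eq_mul_inv, div_le_iff₀ (by linarith)]
      rw [mul_pow] at hKc
      have : (0 : ℝ) < 3 ^ d := by positivity
      nlinarith
    rw [← h1] at hs1 hs3
    have htot : ∑ k ∈ K, (k.natAbs : ℝ) ^ (-ϑ) ≤
        ((2 + 3 ^ d * 2) / Real.log 2 + 2 * d) * Real.log (1 + R) := by
      have : (2 + 3 ^ d * 2 : ℝ) ≤ (2 + 3 ^ d * 2) / Real.log 2 * Real.log (1 + R) := by
        rw [div_mul_eq_mul_div, le_div_iff₀ hl2]
        gcongr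
      linarith
    calc A * R ^ (ϑ * σ) * ∑ k ∈ K, (k.natAbs : ℝ) ^ (-ϑ)
        ≤ A * R ^ (ϑ * σ) * (((2 + 3 ^ d * 2) / Real.log 2 + 2 * d) * Real.log (1 + R)) := by gcongr
      _ = A * R ^ σ * (((2 + 3 ^ d * 2) / Real.log 2 + 2 * d) * Real.log (1 + R)) := by
        rw [show ϑ * σ = σ by rw [h1, one_mul]]
      _ = _ := by ring
  · have hsum : Summable (fun n : ℕ => (n : ℝ) ^ (-ϑ)) := Real.summable_nat_rpow.2 (by linarith)
    have hts : 0 ≤ ∑' n : ℕ, (n : ℝ) ^ (-ϑ) := tsum_nonneg fun n => by positivity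
    refine ⟨A * (2 * (∑' n : ℕ, (n : ℝ) ^ (-ϑ)) + 1), by positivity, fun R hR =>
      ⟨fun h => absurd h h1.not_gt, fun h => absurd h h1.ne', fun _ => ?_⟩⟩
    have hR0 : 0 < R := by linarith
    obtain ⟨K, hK0, hKc, hle⟩ := aux_main d α H σ hH hσ hdio ϑ hϑ R hR
    refine hle.trans ?_
    have hs := aux_natAbs_sum K hK0 (K.sup Int.natAbs) (fun n => (n : ℝ) ^ (-ϑ))
      (fun n => by positivity) (fun k hk => Finset.le_sup (f := Int.natAbs) hk)
    have hs2 : ∑ j ∈ Finset.Icc 1 (K.sup Int.natAbs), (j : ℝ) ^ (-ϑ) ≤ ∑' n : ℕ, (n : ℝ) ^ (-ϑ) :=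
      hsum.sum_le_tsum _ (fun n _ => by positivity)
    have htot : ∑ k ∈ K, (k.natAbs : ℝ) ^ (-ϑ) ≤ 2 * (∑' n : ℕ, (n : ℝ) ^ (-ϑ)) + 1 := by
      linarith
    calc A * R ^ (ϑ * σ) * ∑ k ∈ K, (k.natAbs : ℝ) ^ (-ϑ)
        ≤ A * R ^ (ϑ * σ) * (2 * (∑' n : ℕ, (n : ℝ) ^ (-ϑ)) + 1) := by gcongr
      _ = _ := by ring
end
end

section
/- For every ϑ > 0 and for almost every α ∈ ℝ^d (with respect to Lebesgue measure), the series ∑_{m∈ℤ^d\{0}} |m|^{−dϑ} log^{−ϑ}(1+|m|) ‖m·α‖^{−ϑ} diverges, i.e. equals +∞. -/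
open MeasureTheory Filter Finset
open scoped Real ENNReal Topology BigOperators

noncomputable section

lemma ks_fin {Ω ι : Type*} [MeasurableSpace Ω] [DecidableEq ι] (μ : Measure Ω) [IsProbabilityMeasure μ]
    (E : ι → Set Ω) (hE : ∀ i, MeasurableSet (E i)) (S : Finset ι) (V : ℝ) (K : ℝ)
    (hV : ∑ i ∈ S, ∑ j ∈ S, μ.real (E i ∩ E j) ≤ V)
    (hK : K < ∑ i ∈ S, μ.real (E i)) (hK0 : 0 ≤ K) :
    ((∑ i ∈ S, μ.real (E i)) - K) ^ 2 ≤
      V * μ.real {x | K < ∑ i ∈ S, (E i).indicator (fun _ => (1:ℝ)) x} := by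
  set X : Ω → ℝ := fun x => ∑ i ∈ S, (E i).indicator (fun _ => (1:ℝ)) x with hX
  set M := ∑ i ∈ S, μ.real (E i) with hM
  have hXm : Measurable X := by
    apply Finset.measurable_sum
    intro i _
    exact measurable_const.indicator (hE i)
  set P : Set Ω := {x | K < X x} with hP
  have hPm : MeasurableSet P := measurableSet_lt measurable_const hXm
  have hX0 : ∀ x, 0 ≤ X x := fun x => Finset.sum_nonneg fun i _ =>
    Set.indicator_nonneg (fun _ _ => zero_le_one) x
  have hind : ∀ s : Set Ω, MeasurableSet s → Integrable (s.indicator (fun _ => (1:ℝ))) μ :=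
    fun s hs => (integrable_const 1).indicator hs
  have hintX : Integrable X μ := integrable_finsetSum _ fun i _ => hind _ (hE i)
  have hEX : ∫ x, X x ∂μ = M := by
    rw [integral_finsetSum _ fun i _ => hind _ (hE i)]
    refine Finset.sum_congr rfl fun i _ => ?_
    rw [integral_indicator (hE i)]; simp
  have hX2 : ∀ x, X x ^ 2 = ∑ i ∈ S, ∑ j ∈ S, (E i ∩ E j).indicator (fun _ => (1:ℝ)) x := by
    intro x
    rw [sq, hX, Finset.sum_mul_sum]
    refine Finset.sum_congr rfl fun i _ => Finset.sum_congr rfl fun j _ => ?_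
    by_cases h1 : x ∈ E i <;> by_cases h2 : x ∈ E j <;> simp [h1, h2]
  have hintX2 : Integrable (fun x => X x ^ 2) μ := by
    simp_rw [hX2]
    exact integrable_finsetSum _ fun i _ => integrable_finsetSum _ fun j _ =>
      hind _ ((hE i).inter (hE j))
  have hEX2 : ∫ x, X x ^ 2 ∂μ ≤ V := by
    refine le_trans (le_of_eq ?_) hV
    simp_rw [hX2]
    rw [integral_finsetSum _ fun i _ => integrable_finsetSum _ fun j _ =>
      hind _ ((hE i).inter (hE j))]
    refine Finset.sum_congr rfl fun i _ => ?_
    rw [integral_finsetSum _ fun j _ => hind _ ((hE i).inter (hE j))]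
    refine Finset.sum_congr rfl fun j _ => ?_
    rw [integral_indicator ((hE i).inter (hE j))]; simp
  have key : ∀ t : ℝ, 0 < t → M - K ≤ t * V / 2 + μ.real P / (2 * t) := by
    intro t ht
    have h1 : ∫ x, (X x - K) ∂μ ≤
        ∫ x, (t / 2 * X x ^ 2 + 1 / (2 * t) * P.indicator (fun _ => (1:ℝ)) x) ∂μ := by
      apply integral_mono (hintX.sub (integrable_const _))
        ((hintX2.const_mul _).add ((hind P hPm).const_mul _))
      intro x
      simp only [Pi.add_apply, Pi.sub_apply]
      by_cases hx : x ∈ P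
      · simp only [hx, Set.indicator_of_mem, mul_one]
        have : 0 ≤ (t * X x - 1) ^ 2 / (2 * t) := by positivity
        have e : (t * X x - 1) ^ 2 / (2 * t) = t / 2 * X x ^ 2 + 1 / (2 * t) - X x := by
          field_simp; ring
        linarith
      · simp only [hx, not_false_eq_true, Set.indicator_of_notMem, mul_zero, add_zero]
        have : X x ≤ K := not_lt.mp hx
        have : 0 ≤ t / 2 * X x ^ 2 := by positivity
        linarith
    rw [integral_sub hintX (integrable_const _), hEX,
      integral_add (hintX2.const_mul _) ((hind P hPm).const_mul _),
      integral_const_mul, integral_const_mul, integral_indicator hPm] at h1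
    simp at h1
    have h2 : t / 2 * ∫ x, X x ^ 2 ∂μ ≤ t / 2 * V := by gcongr
    have : μ.real P / (2 * t) = t⁻¹ * 2⁻¹ * μ.real P := by field_simp
    rw [this]
    linarith
  have hA : 0 < M - K := by linarith
  have hVpos : 0 < V := by
    refine lt_of_lt_of_le ?_ hEX2
    have h1 : ∫ x, (2 * M * X x - M ^ 2) ∂μ ≤ ∫ x, X x ^ 2 ∂μ := by
      apply integral_mono ((hintX.const_mul _).sub (integrable_const _)) hintX2
      intro x
      have := sq_nonneg (X x - M)
      simp only [Pi.sub_apply]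
      nlinarith
    rw [integral_sub (hintX.const_mul _) (integrable_const _), integral_const_mul, hEX] at h1
    simp at h1
    have : 0 < M := by linarith
    nlinarith
  have h := key ((M - K) / V) (by positivity)
  have e1 : (M - K) / V * V / 2 = (M - K) / 2 := by field_simp
  have e2 : μ.real P / (2 * ((M - K) / V)) = V * μ.real P / (2 * (M - K)) := by field_simp
  rw [e1, e2] at h
  have h3 : (M - K) / 2 ≤ V * μ.real P / (2 * (M - K)) := by linarith
  rw [le_div_iff₀ (by positivity)] at h3
  nlinarith

lemma kochen_stone {Ω ι : Type*} [MeasurableSpace Ω] [DecidableEq ι] (μ : Measure Ω)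
    [IsProbabilityMeasure μ]
    (E : ι → Set Ω) (hE : ∀ i, MeasurableSet (E i)) (S : ℕ → Finset ι) (C : ℝ) (hC : 0 < C)
    (hM : Tendsto (fun N => ∑ i ∈ S N, μ.real (E i)) atTop atTop)
    (hV : ∀ N, ∑ i ∈ S N, ∑ j ∈ (S N).erase i, μ.real (E i ∩ E j) ≤
      C * (∑ i ∈ S N, μ.real (E i)) ^ 2) :
    ∃ G : Set Ω, MeasurableSet G ∧ (∀ x ∈ G, {i | (∃ N, i ∈ S N) ∧ x ∈ E i}.Infinite) ∧ 1 / C ≤ μ.real G := by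
  set B : ℕ → Set Ω := fun K =>
    ⋃ N, {x | (K:ℝ) < ∑ i ∈ S N, (E i).indicator (fun _ => (1:ℝ)) x} with hB
  have hBm : ∀ K, MeasurableSet (B K) := by
    intro K
    refine MeasurableSet.iUnion fun N => measurableSet_lt measurable_const ?_
    apply Finset.measurable_sum
    intro i _
    exact measurable_const.indicator (hE i)
  have hanti : Antitone B := by
    intro K L hKL x hx
    simp only [hB, Set.mem_iUnion, Set.mem_ofPred_eq] at hx ⊢
    obtain ⟨N, hN⟩ := hx
    exact ⟨N, lt_of_le_of_lt (by exact_mod_cast hKL) hN⟩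
  refine ⟨⋂ K, B K, MeasurableSet.iInter hBm, ?_, ?_⟩
  · intro x hx hfin
    rw [Set.mem_iInter] at hx
    have := hx hfin.toFinset.card
    simp only [hB, Set.mem_iUnion, Set.mem_ofPred_eq] at this
    obtain ⟨N, hN⟩ := this
    have h2 : ∑ i ∈ S N, (E i).indicator (fun _ => (1:ℝ)) x ≤ hfin.toFinset.card := by
      classical
      have : ∑ i ∈ S N, (E i).indicator (fun _ => (1:ℝ)) x =
          ∑ i ∈ S N, if i ∈ hfin.toFinset then 1 else 0 := by
        refine Finset.sum_congr rfl fun i hi => ?_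
        have : ∃ N, i ∈ S N := ⟨N, hi⟩
        simp [Set.indicator_apply, this]
      rw [this]
      rw [Finset.sum_ite_mem]
      simp only [sum_const, nsmul_eq_mul, mul_one]
      exact_mod_cast Finset.card_le_card Finset.inter_subset_right
    linarith
  · have hlim : Tendsto (fun K => μ.real (B K)) atTop (𝓝 (μ.real (⋂ K, B K))) := by
      have := tendsto_measure_iInter_atTop (μ := μ) (fun K => (hBm K).nullMeasurableSet) hanti
        ⟨0, measure_ne_top _ _⟩
      exact (ENNReal.tendsto_toReal (measure_ne_top _ _)).comp this
    refine ge_of_tendsto' hlim fun K => ?_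
    -- lower bound
    have hlim2 : Tendsto (fun M : ℝ => (M - K) ^ 2 / (M + C * M ^ 2)) atTop (𝓝 (1 / C)) := by
      have h1 : Tendsto (fun M : ℝ => (1 - K * M⁻¹) ^ 2 / (M⁻¹ + C)) atTop
          (𝓝 ((1 - K * 0) ^ 2 / (0 + C))) := by
        refine Tendsto.div ?_ (tendsto_inv_atTop_zero.add tendsto_const_nhds) (by simpa using hC.ne')
        exact (tendsto_const_nhds.sub (tendsto_inv_atTop_zero.const_mul _)).pow 2
      simp only [mul_zero, sub_zero, one_pow, zero_add] at h1
      refine h1.congr' ?_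
      filter_upwards [eventually_gt_atTop 0] with M hM
      field_simp
    have hlim3 := hlim2.comp hM
    refine le_of_tendsto hlim3 ?_
    filter_upwards [hM.eventually_gt_atTop (K:ℝ)] with N hN
    simp only [Function.comp]
    set M := ∑ i ∈ S N, μ.real (E i) with hMd
    have hMpos : 0 < M := lt_of_le_of_lt (Nat.cast_nonneg _) hN
    have hV' : ∑ i ∈ S N, ∑ j ∈ S N, μ.real (E i ∩ E j) ≤ M + C * M ^ 2 := by
      have : ∑ i ∈ S N, ∑ j ∈ S N, μ.real (E i ∩ E j) =
          M + ∑ i ∈ S N, ∑ j ∈ (S N).erase i, μ.real (E i ∩ E j) := by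
        rw [hMd, ← Finset.sum_add_distrib]
        refine Finset.sum_congr rfl fun i hi => ?_
        rw [← Finset.add_sum_erase _ _ hi, Set.inter_self]
      rw [this]
      linarith [hV N]
    have := ks_fin μ E hE (S N) _ K hV' hN (Nat.cast_nonneg _)
    rw [div_le_iff₀ (by positivity), mul_comm]
    refine this.trans ?_
    refine mul_le_mul_of_nonneg_left ?_ (by positivity)
    exact measureReal_mono (Set.subset_iUnion (fun N => {x | (K:ℝ) < ∑ i ∈ S N, (E i).indicator (fun _ => (1:ℝ)) x}) N)

/-- The weight `1/(n² log(n+1))`. -/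
def gw (n : ℕ) : ℝ := 1 / ((n:ℝ) ^ 2 * Real.log (n + 1))

lemma gw_nonneg (n : ℕ) : 0 ≤ gw n := by
  unfold gw
  have : 0 ≤ Real.log ((n:ℝ) + 1) := Real.log_nonneg (by linarith [Nat.cast_nonneg (α := ℝ) n])
  positivity

lemma log_succ_pos {n : ℕ} (hn : 1 ≤ n) : 0 < Real.log ((n:ℝ) + 1) := by
  apply Real.log_pos
  have : (1:ℝ) ≤ n := by exact_mod_cast hn
  linarith

lemma half_lt_log_succ {n : ℕ} (hn : 1 ≤ n) : 1 / 2 < Real.log ((n:ℝ) + 1) := by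
  have h2 := Real.log_two_gt_d9
  have : (1:ℝ) ≤ n := by exact_mod_cast hn
  have : Real.log 2 ≤ Real.log ((n:ℝ) + 1) := Real.log_le_log (by norm_num) (by linarith)
  linarith

lemma gw_mul_le {j k : ℕ} (hj : 1 ≤ j) (hk : 1 ≤ k) : gw (j * k) ≤ gw j * (1 / (k:ℝ) ^ 2) := by
  unfold gw
  have hj' : (1:ℝ) ≤ j := by exact_mod_cast hj
  have hk' : (1:ℝ) ≤ k := by exact_mod_cast hk
  rw [div_mul_div_comm, one_mul]
  have hl := log_succ_pos hj
  apply one_div_le_one_div_of_le (by positivity)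
  have : Real.log ((j:ℝ) + 1) ≤ Real.log (((j * k : ℕ):ℝ) + 1) := by
    apply Real.log_le_log (by positivity)
    push_cast
    nlinarith
  calc (j:ℝ) ^ 2 * Real.log (j + 1) * k ^ 2 = ((j:ℝ) * k) ^ 2 * Real.log (j + 1) := by ring
    _ ≤ _ := by push_cast at *; gcongr

lemma sum_inv_sq_le (N : ℕ) : ∑ k ∈ Icc 1 N, 1 / (k:ℝ) ^ 2 ≤ 2 := by
  have : ∀ N : ℕ, ∑ k ∈ Icc 1 (N+1), 1 / (k:ℝ) ^ 2 ≤ 2 - 1 / ((N:ℝ) + 1) := by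
    intro N
    induction N with
    | zero => norm_num
    | succ n ih =>
      rw [Finset.sum_Icc_succ_top (by omega)]
      have h : 1 / (((n + 1 + 1 : ℕ):ℝ)) ^ 2 ≤ 1 / ((n:ℝ) + 1) - 1 / ((n:ℝ) + 1 + 1) := by
        rw [div_sub_div _ _ (by positivity) (by positivity)]
        rw [div_le_div_iff₀ (by positivity) (by positivity)]
        push_cast
        have : (0:ℝ) ≤ n := Nat.cast_nonneg _
        nlinarith
      push_cast at *
      linarith
  rcases N with _ | n
  · simp
  · refine (this n).trans ?_
    have : 0 ≤ 1 / ((n:ℝ) + 1) := by positivity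
    linarith

lemma sum_totient_ge (N : ℕ) :
    ∑ n ∈ Icc 1 N, (n:ℝ) * gw n ≤ 2 * ∑ n ∈ Icc 1 N, (Nat.totient n : ℝ) * gw n := by
  have h1 : ∑ n ∈ Icc 1 N, (n:ℝ) * gw n =
      ∑ n ∈ Icc 1 N, ∑ j ∈ Icc 1 N, ∑ k ∈ Icc 1 N,
        if j * k = n then (Nat.totient j : ℝ) * gw (j * k) else 0 := by
    refine Finset.sum_congr rfl fun n hn => ?_
    rw [Finset.mem_Icc] at hn
    have hs : (n:ℝ) = ∑ p ∈ n.divisorsAntidiagonal, (Nat.totient p.1 : ℝ) := by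
      rw [Nat.sum_divisorsAntidiagonal (fun j _ => (Nat.totient j : ℝ))]
      exact_mod_cast (Nat.sum_totient n).symm
    conv_lhs => rw [hs]
    rw [Finset.sum_mul, ← Finset.sum_product', ← Finset.sum_filter]
    refine Finset.sum_congr_of_eq_on_inter ?_ ?_ ?_
    · intro p hp hp'
      exfalso
      apply hp'
      rw [Nat.mem_divisorsAntidiagonal] at hp
      have h1 : p.1 ∣ n := ⟨p.2, hp.1.symm⟩
      have h2 : p.2 ∣ n := ⟨p.1, by rw [mul_comm]; exact hp.1.symm⟩
      have h3 := Nat.le_of_dvd (by omega) h1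
      have h4 := Nat.le_of_dvd (by omega) h2
      have h5 := Nat.pos_of_dvd_of_pos h1 (by omega)
      have h6 := Nat.pos_of_dvd_of_pos h2 (by omega)
      simp only [Finset.mem_filter, Finset.mem_product, Finset.mem_Icc]
      exact ⟨⟨⟨h5, by omega⟩, ⟨h6, by omega⟩⟩, hp.1⟩
    · intro p hp hp'
      exfalso
      apply hp'
      simp only [Finset.mem_filter] at hp
      rw [Nat.mem_divisorsAntidiagonal]
      exact ⟨hp.2, by omega⟩
    · intro p hp _
      rw [Nat.mem_divisorsAntidiagonal] at hp
      rw [hp.1]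
  rw [h1, Finset.sum_comm, Finset.mul_sum]
  refine Finset.sum_le_sum fun j hj => ?_
  rw [Finset.mem_Icc] at hj
  rw [Finset.sum_comm]
  calc ∑ k ∈ Icc 1 N, ∑ n ∈ Icc 1 N, (if j * k = n then (Nat.totient j : ℝ) * gw (j * k) else 0)
      ≤ ∑ k ∈ Icc 1 N, (Nat.totient j : ℝ) * gw j * (1 / (k:ℝ) ^ 2) := by
        refine Finset.sum_le_sum fun k hk => ?_
        rw [Finset.mem_Icc] at hk
        rw [Finset.sum_ite_eq]
        have := gw_mul_le hj.1 hk.1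
        have h0 : (Nat.totient j : ℝ) * gw (j * k) ≤ (Nat.totient j : ℝ) * gw j * (1 / (k:ℝ) ^ 2) := by
          rw [mul_assoc]; gcongr
        split_ifs
        · exact h0
        · exact le_trans (mul_nonneg (Nat.cast_nonneg _) (gw_nonneg _)) h0
    _ = (Nat.totient j : ℝ) * gw j * ∑ k ∈ Icc 1 N, (1 / (k:ℝ) ^ 2) := by rw [Finset.mul_sum]
    _ ≤ (Nat.totient j : ℝ) * gw j * 2 := by
        have := gw_nonneg j
        gcongr
        exact sum_inv_sq_le N
    _ = _ := by ring

lemma tendsto_sum_ngw : Tendsto (fun N : ℕ => ∑ n ∈ Icc 1 N, (n:ℝ) * gw n) atTop atTop := by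
  have hnn : ∀ n : ℕ, 0 ≤ (n:ℝ) * gw n := fun n => mul_nonneg (Nat.cast_nonneg _) (gw_nonneg _)
  have hform : ∀ n : ℕ, 1 ≤ n → (n:ℝ) * gw n = 1 / ((n:ℝ) * Real.log (n + 1)) := by
    intro n hn
    unfold gw
    have := log_succ_pos hn
    have : (0:ℝ) < n := by exact_mod_cast hn
    field_simp
  have hns : ¬ Summable (fun n : ℕ => (n:ℝ) * gw n) := by
    rw [← summable_condensed_iff_of_nonneg hnn]
    · intro hs
      have : Summable (fun k : ℕ => 1 / ((k:ℝ) + 1)) := by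
        refine Summable.of_nonneg_of_le (fun k => by positivity) (fun k => ?_) hs
        have h1 : 1 ≤ 2 ^ k := Nat.one_le_two_pow
        rw [hform _ h1]
        have hl := log_succ_pos h1
        have : Real.log (((2 ^ k : ℕ):ℝ) + 1) ≤ k + 1 := by
          calc Real.log (((2 ^ k : ℕ):ℝ) + 1) ≤ Real.log (2 ^ (k+1)) := by
                apply Real.log_le_log (by positivity)
                have : (1:ℝ) ≤ 2 ^ k := one_le_pow₀ (by norm_num)
                push_cast
                rw [pow_succ]
                linarith
            _ = (k + 1) * Real.log 2 := by rw [Real.log_pow]; push_cast; ring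
            _ ≤ (k + 1) * 1 := by
                gcongr
                linarith [Real.log_two_lt_d9]
            _ = _ := by ring
        push_cast at *
        have e : (2:ℝ) ^ k * (1 / (2 ^ k * Real.log (2 ^ k + 1))) = 1 / Real.log (2 ^ k + 1) := by
          field_simp
        rw [e]
        exact one_div_le_one_div_of_le hl this
      have h2 := (summable_nat_add_iff (f := fun n : ℕ => 1 / (n:ℝ)) 1).mp (by simpa using this)
      exact Real.not_summable_one_div_natCast h2
    · intro m n hm hmn
      rw [hform m hm, hform n (by omega)]
      have := log_succ_pos hm
      have : (0:ℝ) < m := by exact_mod_cast hm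
      have : (m:ℝ) ≤ n := by exact_mod_cast hmn
      gcongr
  have := (not_summable_iff_tendsto_nat_atTop_of_nonneg hnn).mp hns
  have h2 := this.comp (tendsto_add_atTop_nat 1)
  refine h2.congr fun N => ?_
  simp only [Function.comp]
  rw [Finset.range_eq_Ico, Finset.sum_eq_sum_Ico_succ_bot (by omega)]
  simp only [Nat.cast_zero, zero_mul, zero_add]
  rfl

lemma tendsto_sum_totient :
    Tendsto (fun N : ℕ => ∑ n ∈ Icc 1 N, (Nat.totient n : ℝ) * gw n) atTop atTop := by
  have := tendsto_sum_ngw.atTop_div_const (show (0:ℝ) < 2 by norm_num)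
  refine tendsto_atTop_mono (fun N => ?_) this
  have := sum_totient_ge N
  linarith

instance probCircle : IsProbabilityMeasure (volume : Measure UnitAddCircle) :=
  ⟨UnitAddCircle.measure_univ⟩

/-- Points of order `q` on the circle. -/
def ordPts (q : ℕ) : Finset UnitAddCircle :=
  if h : 0 < q then (AddCircle.finite_setOfPred_addOrderOf_eq (1:ℝ) h).toFinset else ∅

lemma mem_ordPts {q : ℕ} (hq : 0 < q) (y : UnitAddCircle) : y ∈ ordPts q ↔ addOrderOf y = q := by
  simp [ordPts, hq]

lemma card_ordPts {q : ℕ} (hq : 0 < q) : (ordPts q).card = Nat.totient q := by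
  rw [← AddCircle.card_addOrderOf_eq_totient (1:ℝ) (n := q), ← Nat.card_eq_finsetCard]
  apply Nat.card_congr
  exact Equiv.subtypeEquivRight (fun y => mem_ordPts hq y)

/-- Number of torsion points of given exponent near `0`. -/
lemma torsion_near (L : ℕ) (hL : 0 < L) (ε : ℝ) (hε : 0 ≤ ε) :
    ∃ T : Finset UnitAddCircle, (T.card : ℝ) ≤ 2 * L * ε ∧
      ∀ w : UnitAddCircle, L • w = 0 → w ≠ 0 → ‖w‖ ≤ ε → w ∈ T := by
  classical
  set K : ℕ := ⌊(L:ℝ) * ε⌋₊ with hK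
  have hLpos : (0:ℝ) < L := by exact_mod_cast hL
  refine ⟨((Finset.Icc (-(K:ℤ)) K).erase 0).image (fun j : ℤ => (((j:ℝ) / L : ℝ) : UnitAddCircle)),
    ?_, ?_⟩
  · have h1 : (((Finset.Icc (-(K:ℤ)) K).erase 0).image
        (fun j : ℤ => (((j:ℝ) / L : ℝ) : UnitAddCircle))).card ≤ 2 * K := by
      refine Finset.card_image_le.trans ?_
      rw [Finset.card_erase_of_mem (by simp), Int.card_Icc]
      omega
    have h2 : (K:ℝ) ≤ L * ε := Nat.floor_le (by positivity)
    have h3 : ((((Finset.Icc (-(K:ℤ)) K).erase 0).image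
        (fun j : ℤ => (((j:ℝ) / L : ℝ) : UnitAddCircle))).card : ℝ) ≤ 2 * K := by exact_mod_cast h1
    linarith
  · intro w
    induction w using QuotientAddGroup.induction_on with
    | H x =>
      intro hLw hw hn
      have hn' : |x - round x| ≤ ε := by rw [← UnitAddCircle.norm_eq]; exact hn
      have hxe : ((x - round x : ℝ) : UnitAddCircle) = (x : UnitAddCircle) := by
        rw [AddCircle.coe_sub, sub_eq_self, AddCircle.coe_eq_zero_iff]
        exact ⟨round x, by simp⟩
      have h0 : ((L • (x - round x) : ℝ) : UnitAddCircle) = 0 := by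
        rw [AddCircle.coe_nsmul, hxe]; exact hLw
      rw [AddCircle.coe_eq_zero_iff] at h0
      obtain ⟨j, hj⟩ := h0
      simp only [zsmul_eq_mul, mul_one, nsmul_eq_mul] at hj
      have hxj : x - round x = (j:ℝ) / L := by
        rw [hj]; field_simp
      rw [Finset.mem_image]
      refine ⟨j, ?_, by rw [← hxj]; exact hxe⟩
      rw [Finset.mem_erase, Finset.mem_Icc]
      constructor
      · rintro rfl
        apply hw
        rw [hxj] at hxe
        rw [← show ((x:ℝ) : UnitAddCircle) = ((x : ℝ) : ℝ ⧸ AddSubgroup.zmultiples (1:ℝ)) from rfl, ← hxe]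
        simp
      · have : (|j| : ℝ) ≤ L * ε := by
          rw [hj, abs_mul, abs_of_pos hLpos]; gcongr
        have h5 : j.natAbs ≤ K := by
          apply Nat.le_floor
          rw [Nat.cast_natAbs]
          exact_mod_cast this
        omega

lemma torsion_card (g : ℕ) (hg : 0 < g) (T : Finset UnitAddCircle) (hT : ∀ y ∈ T, g • y = 0) :
    T.card ≤ g := by
  classical
  have : T ⊆ (Finset.range g).image (fun m : ℕ => (((m:ℝ) / g * 1 : ℝ) : UnitAddCircle)) := by
    intro y hy
    obtain ⟨m, hm, h⟩ := (AddCircle.nsmul_eq_zero_iff hg).mp (hT y hy)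
    exact Finset.mem_image.mpr ⟨m, Finset.mem_range.mpr hm, h⟩
  exact (Finset.card_le_card this).trans (Finset.card_image_le.trans (by simp))

open Classical in
lemma pair_count {q r : ℕ} (hq : 0 < q) (hr : 0 < r) (ε : ℝ) (hε : 0 ≤ ε) :
    ((((ordPts q) ×ˢ (ordPts r)).filter (fun p => p.1 ≠ p.2 ∧ ‖p.1 - p.2‖ ≤ ε)).card : ℝ) ≤
      2 * q * r * ε := by
  obtain ⟨T, hTc, hT⟩ := torsion_near (Nat.lcm q r) (Nat.lcm_pos hq hr) ε hε
  have hg : 0 < Nat.gcd q r := Nat.gcd_pos_of_pos_left _ hq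
  have h1 : (((ordPts q) ×ˢ (ordPts r)).filter (fun p => p.1 ≠ p.2 ∧ ‖p.1 - p.2‖ ≤ ε)).card ≤
      Nat.gcd q r * T.card := by
    refine Finset.card_le_mul_card_image_of_maps_to (f := fun p => p.1 - p.2) ?_ _ ?_
    · rintro ⟨y, z⟩ hp
      simp only [Finset.mem_filter, Finset.mem_product, mem_ordPts hq, mem_ordPts hr] at hp
      obtain ⟨⟨hy, hz⟩, hne, hn⟩ := hp
      refine hT _ ?_ (sub_ne_zero.mpr hne) hn
      rw [smul_sub]
      rw [addOrderOf_dvd_iff_nsmul_eq_zero.mp (hy ▸ Nat.dvd_lcm_left q r),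
        addOrderOf_dvd_iff_nsmul_eq_zero.mp (hz ▸ Nat.dvd_lcm_right q r), sub_zero]
    · intro w _
      set F := (((ordPts q) ×ˢ (ordPts r)).filter (fun p => p.1 ≠ p.2 ∧ ‖p.1 - p.2‖ ≤ ε)).filter
        (fun p => p.1 - p.2 = w) with hF
      rcases F.eq_empty_or_nonempty with h | ⟨p0, hp0⟩
      · rw [h]; simp
      have hmem : ∀ p ∈ F, addOrderOf p.1 = q ∧ addOrderOf p.2 = r ∧ p.1 - p.2 = w := by
        intro p hp
        simp only [hF, Finset.mem_filter, Finset.mem_product, mem_ordPts hq, mem_ordPts hr] at hp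
        exact ⟨hp.1.1.1, hp.1.1.2, hp.2⟩
      have hinj : Set.InjOn (fun p : UnitAddCircle × UnitAddCircle => p.1 - p0.1) F := by
        intro p hp p' hp' h
        have a1 := (hmem p hp).2.2
        have a2 := (hmem p' hp').2.2
        have h3 : p.1 = p'.1 := sub_left_injective h
        refine Prod.ext h3 ?_
        rw [← a2, h3] at a1
        exact sub_right_injective a1
      rw [← Finset.card_image_of_injOn hinj]
      apply torsion_card _ hg
      intro y hy
      obtain ⟨p, hp, rfl⟩ := Finset.mem_image.mp hy
      obtain ⟨b1, b2, b3⟩ := hmem p hp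
      obtain ⟨c1, c2, c3⟩ := hmem p0 hp0
      rw [← addOrderOf_dvd_iff_nsmul_eq_zero]
      apply Nat.dvd_gcd
      · rw [addOrderOf_dvd_iff_nsmul_eq_zero, smul_sub]
        rw [addOrderOf_dvd_iff_nsmul_eq_zero.mp b1.dvd, addOrderOf_dvd_iff_nsmul_eq_zero.mp c1.dvd, sub_zero]
      · have : p.1 - p0.1 = p.2 - p0.2 := by
          have : p.1 - p.2 = p0.1 - p0.2 := b3.trans c3.symm
          rw [sub_eq_sub_iff_add_eq_add] at this ⊢
          rw [this, add_comm]
        rw [this, addOrderOf_dvd_iff_nsmul_eq_zero, smul_sub]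
        rw [addOrderOf_dvd_iff_nsmul_eq_zero.mp b2.dvd, addOrderOf_dvd_iff_nsmul_eq_zero.mp c2.dvd, sub_zero]
  have h2 : ((Nat.gcd q r : ℕ):ℝ) * (Nat.lcm q r : ℕ) = q * r := by exact_mod_cast Nat.gcd_mul_lcm q r
  calc _ ≤ ((Nat.gcd q r * T.card : ℕ) : ℝ) := by exact_mod_cast h1
    _ = (Nat.gcd q r : ℝ) * T.card := by push_cast; ring
    _ ≤ (Nat.gcd q r : ℝ) * (2 * (Nat.lcm q r : ℕ) * ε) := by gcongr
    _ = 2 * ((Nat.gcd q r : ℝ) * (Nat.lcm q r : ℕ)) * ε := by ring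
    _ = _ := by rw [h2]; ring

lemma real_closedBall (y : UnitAddCircle) {a : ℝ} (ha : 0 ≤ a) (ha' : 2 * a ≤ 1) :
    (volume : Measure UnitAddCircle).real (Metric.closedBall y a) = 2 * a := by
  unfold Measure.real
  rw [AddCircle.volume_closedBall, min_eq_right ha', ENNReal.toReal_ofReal (by linarith)]

open Classical in
lemma pair_measure {q r : ℕ} (hq : 0 < q) (hr : 0 < r) (a b : ℝ) (ha : 0 ≤ a) (hb : 0 ≤ b)
    (ha' : 2 * a ≤ 1) (hb' : 2 * b ≤ 1) :
    ∑ y ∈ ordPts q, ∑ z ∈ ordPts r, (if y ≠ z then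
      (volume : Measure UnitAddCircle).real (Metric.closedBall y a ∩ Metric.closedBall z b) else 0)
      ≤ 8 * ((q * a) * (r * b)) := by
  have hbd : ∀ y z : UnitAddCircle, (if y ≠ z then
      (volume : Measure UnitAddCircle).real (Metric.closedBall y a ∩ Metric.closedBall z b) else 0)
      ≤ if (y ≠ z ∧ ‖y - z‖ ≤ a + b) then 2 * min a b else 0 := by
    intro y z
    by_cases h : y ≠ z
    · by_cases h2 : ‖y - z‖ ≤ a + b
      · rw [if_pos h, if_pos ⟨h, h2⟩, mul_min_of_nonneg _ _ (by norm_num)]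
        apply le_min
        · rw [← real_closedBall y ha ha']
          exact measureReal_mono Set.inter_subset_left
        · rw [← real_closedBall z hb hb']
          exact measureReal_mono Set.inter_subset_right
      · have : Metric.closedBall y a ∩ Metric.closedBall z b = ∅ := by
          rw [Set.eq_empty_iff_forall_notMem]
          rintro x ⟨h3, h4⟩
          rw [Metric.mem_closedBall] at h3 h4
          apply h2
          rw [← dist_eq_norm]
          have := dist_triangle_left y z x
          linarith
        rw [this]
        simp [h2]
    · simp [h]
  calc _ ≤ ∑ y ∈ ordPts q, ∑ z ∈ ordPts r,
        (if (y ≠ z ∧ ‖y - z‖ ≤ a + b) then 2 * min a b else 0) :=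
        Finset.sum_le_sum fun y _ => Finset.sum_le_sum fun z _ => hbd y z
    _ = ((((ordPts q) ×ˢ (ordPts r)).filter (fun p => p.1 ≠ p.2 ∧ ‖p.1 - p.2‖ ≤ a + b)).card : ℝ)
          * (2 * min a b) := by
        rw [← Finset.sum_product', ← Finset.sum_filter, Finset.sum_const, nsmul_eq_mul]
    _ ≤ (2 * q * r * (a + b)) * (2 * min a b) := by
        have : 0 ≤ min a b := le_min ha hb
        gcongr
        exact pair_count hq hr _ (by linarith)
    _ ≤ _ := by
        have : (a + b) * min a b ≤ 2 * (a * b) := by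
          rcases le_total a b with h | h
          · rw [min_eq_left h]; nlinarith
          · rw [min_eq_right h]; nlinarith
        have h2 : (0:ℝ) ≤ 4 * (q * r) := by positivity
        nlinarith [mul_le_mul_of_nonneg_left this h2]

/-- `β` has infinitely many good integer relations. -/
def GoodRel {d : ℕ} (β : Fin d → UnitAddCircle) : Prop :=
  {m : Fin d → ℤ | m ≠ 0 ∧ ∃ n : ℕ, 1 ≤ n ∧ (∀ i, |m i| ≤ (n:ℤ)) ∧
    ‖∑ i, m i • β i‖ ≤ 1 / ((n:ℝ) ^ d * Real.log (n + 1))}.Infinite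

lemma gw_le_two (n : ℕ) : gw n ≤ 2 := by
  rcases Nat.eq_zero_or_pos n with rfl | hn
  · simp [gw]
  · unfold gw
    have h := half_lt_log_succ hn
    have h1 : (1:ℝ) ≤ (n:ℝ) ^ 2 := one_le_pow₀ (by exact_mod_cast hn)
    rw [div_le_iff₀ (by positivity)]
    nlinarith

lemma tendsto_gw : Tendsto gw atTop (𝓝 0) := by
  have h1 : Tendsto (fun n : ℕ => 2 * (1 / (n:ℝ))) atTop (𝓝 0) := by
    simpa using tendsto_one_div_atTop_nhds_zero_nat.const_mul (2:ℝ)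
  refine squeeze_zero' (Eventually.of_forall gw_nonneg) ?_ h1
  filter_upwards [eventually_ge_atTop 1] with n hn
  unfold gw
  have h := half_lt_log_succ hn
  have h1 : (1:ℝ) ≤ n := by exact_mod_cast hn
  have e : 2 * (1 / (n:ℝ)) = 2 / n := by ring
  rw [e, div_le_div_iff₀ (by positivity) (by positivity)]
  nlinarith [mul_nonneg (sub_nonneg.mpr h1) (sub_nonneg.mpr h.le), mul_le_mul h1 h.le (by norm_num) (by positivity)]

lemma ae_circle : ∀ᵐ x ∂(volume : Measure UnitAddCircle),
    x ∈ addWellApproximable UnitAddCircle (fun n => gw n / 4) := by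
  classical
  set δ : ℕ → ℝ := fun n => gw n / 8 with hδ
  have hδ0 : ∀ n, 0 ≤ δ n := fun n => by have := gw_nonneg n; simp only [hδ]; positivity
  have hδ1 : ∀ n, 2 * δ n ≤ 1 := fun n => by have := gw_le_two n; simp only [hδ]; linarith
  let E : (Σ _ : ℕ, UnitAddCircle) → Set UnitAddCircle := fun i => Metric.closedBall i.2 (δ i.1)
  let S : ℕ → Finset (Σ _ : ℕ, UnitAddCircle) := fun N => (Icc 1 N).sigma ordPts
  have hM : ∀ N, ∑ i ∈ S N, (volume : Measure UnitAddCircle).real (E i) =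
      (1 / 4) * ∑ n ∈ Icc 1 N, (Nat.totient n : ℝ) * gw n := by
    intro N
    simp only [S, Finset.sum_sigma, E]
    rw [Finset.mul_sum]
    refine Finset.sum_congr rfl fun n hn => ?_
    rw [Finset.mem_Icc] at hn
    rw [Finset.sum_congr rfl fun y _ => real_closedBall y (hδ0 n) (hδ1 n)]
    rw [Finset.sum_const, card_ordPts hn.1, nsmul_eq_mul]
    simp only [hδ]
    ring
  obtain ⟨G, hGm, hG, hG1⟩ := kochen_stone (volume : Measure UnitAddCircle) E
    (fun i => Metric.isClosed_closedBall.measurableSet) S 8 (by norm_num)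
    (by
      simp_rw [hM]
      exact tendsto_sum_totient.const_mul_atTop (by norm_num))
    (by
      intro N
      have hle : ∑ i ∈ S N, ∑ j ∈ (S N).erase i,
          (volume : Measure UnitAddCircle).real (E i ∩ E j) ≤
          ∑ i ∈ S N, ∑ j ∈ S N, (if i.2 ≠ j.2 then
            (volume : Measure UnitAddCircle).real (E i ∩ E j) else 0) := by
        refine Finset.sum_le_sum fun i hi => ?_
        rw [← Finset.sum_filter]
        refine Finset.sum_le_sum_of_subset_of_nonneg ?_ (fun _ _ _ => measureReal_nonneg)
        intro j hj
        rw [Finset.mem_erase] at hj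
        rw [Finset.mem_filter]
        refine ⟨hj.2, fun h => hj.1 ?_⟩
        have hi' := hi
        have hj' := hj.2
        simp only [S, Finset.mem_sigma, Finset.mem_Icc] at hi' hj'
        have h1 := (mem_ordPts hi'.1.1 _).mp hi'.2
        have h2 := (mem_ordPts hj'.1.1 _).mp hj'.2
        obtain ⟨i1, i2⟩ := i
        obtain ⟨j1, j2⟩ := j
        simp only at h h1 h2
        subst h
        rw [h1] at h2
        rw [h2]
      refine hle.trans ?_
      rw [hM]
      have hs : ∑ i ∈ S N, ∑ j ∈ S N, (if i.2 ≠ j.2 then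
            (volume : Measure UnitAddCircle).real (E i ∩ E j) else 0) ≤
          8 * (∑ n ∈ Icc 1 N, (n:ℝ) * δ n) ^ 2 := by
        simp only [S, Finset.sum_sigma, E]
        rw [sq, Finset.sum_mul_sum, Finset.mul_sum]
        refine Finset.sum_le_sum fun q hq => ?_
        rw [Finset.sum_comm, Finset.mul_sum]
        refine Finset.sum_le_sum fun r hr => ?_
        rw [Finset.mem_Icc] at hq hr
        exact pair_measure hq.1 hr.1 _ _ (hδ0 q) (hδ0 r) (hδ1 q) (hδ1 r)
      refine hs.trans ?_
      have h1 := sum_totient_ge N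
      have h2 : ∑ n ∈ Icc 1 N, (n:ℝ) * δ n = (1 / 8) * ∑ n ∈ Icc 1 N, (n:ℝ) * gw n := by
        rw [Finset.mul_sum]
        refine Finset.sum_congr rfl fun n _ => ?_
        simp only [hδ]; ring
      rw [h2]
      have h3 : 0 ≤ ∑ n ∈ Icc 1 N, (n:ℝ) * gw n :=
        Finset.sum_nonneg fun n _ => mul_nonneg (Nat.cast_nonneg _) (gw_nonneg _)
      have h4 : (1 / 8) * ∑ n ∈ Icc 1 N, (n:ℝ) * gw n ≤
          (1 / 4) * ∑ n ∈ Icc 1 N, (Nat.totient n : ℝ) * gw n := by linarith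
      have h5 := pow_le_pow_left₀ (by positivity) h4 2
      linarith)
  rcases AddCircle.addWellApproximable_ae_empty_or_univ (T := 1) (fun n => gw n / 4)
    (by simpa using tendsto_gw.div_const 4) with h | h
  · exfalso
    have hsub : G ⊆ addWellApproximable UnitAddCircle (fun n => gw n / 4) := by
      intro x hx
      rw [UnitAddCircle.mem_addWellApproximable_iff]
      intro hfin
      apply hG x hx
      refine Set.Finite.subset (hfin.toFinset.sigma ordPts).finite_toSet ?_
      rintro ⟨n, y⟩ ⟨⟨N, hN⟩, hxE⟩
      simp only [S, Finset.mem_sigma, Finset.mem_Icc] at hN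
      simp only [E, Metric.mem_closedBall, hδ] at hxE
      rw [Finset.mem_coe, Finset.mem_sigma]
      refine ⟨?_, hN.2⟩
      rw [Set.Finite.mem_toFinset]
      obtain ⟨m, hm, hg, hy⟩ := (AddCircle.addOrderOf_eq_pos_iff hN.1.1).mp
        ((mem_ordPts hN.1.1 _).mp hN.2)
      refine ⟨m, hm, hg, ?_⟩
      rw [mul_one] at hy
      rw [hy, ← dist_eq_norm]
      have : 0 < gw n := by
        unfold gw
        have := log_succ_pos hN.1.1
        have : (0:ℝ) < n := by exact_mod_cast hN.1.1
        positivity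
      linarith
    have h0 : (volume : Measure UnitAddCircle) G = 0 :=
      measure_mono_null hsub (by simpa [ae_iff] using h)
    have : (volume : Measure UnitAddCircle).real G = 0 := by simp [Measure.real, h0]
    rw [this] at hG1
    norm_num at hG1
  · exact h

lemma ae_good_one : ∀ᵐ β ∂(volume : Measure (Fin 1 → UnitAddCircle)), GoodRel β := by
  have h := (volume_preserving_funUnique (Fin 1) UnitAddCircle).quasiMeasurePreserving.ae ae_circle
  filter_upwards [h] with β hβ
  rw [UnitAddCircle.mem_addWellApproximable_iff] at hβ
  have hinj : Set.InjOn (fun n : ℕ => (fun _ : Fin 1 => (n:ℤ)))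
      {n : ℕ | ∃ m < n, gcd m n = 1 ∧ ‖MeasurableEquiv.funUnique (Fin 1) UnitAddCircle β - ↑((m : ℝ) / n)‖ < gw n / 4} := by
    intro a _ b _ hab
    have := congrFun hab 0
    simp only at this
    exact_mod_cast this
  refine (hβ.image hinj).mono ?_
  rintro _ ⟨n, ⟨m, hmn, -, hb⟩, rfl⟩
  have hn : 1 ≤ n := by omega
  refine ⟨fun h => by have := congrFun h 0; simp at this; omega, n, hn, fun i => by simp, ?_⟩
  have hx : MeasurableEquiv.funUnique (Fin 1) UnitAddCircle β = β 0 := rfl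
  rw [hx] at hb
  simp only [Fin.sum_univ_one, natCast_zsmul]
  have hz : n • (((m:ℝ) / n : ℝ) : UnitAddCircle) = 0 :=
    (AddCircle.nsmul_eq_zero_iff hn).mpr ⟨m, hmn, by rw [mul_one]⟩
  have e : n • β 0 = n • (β 0 - (((m:ℝ) / n : ℝ) : UnitAddCircle)) := by
    rw [smul_sub, hz, sub_zero]
  have hnp : (0:ℝ) < n := by exact_mod_cast hn
  rw [e]
  calc _ ≤ (n:ℝ) * ‖β 0 - (((m:ℝ) / n : ℝ) : UnitAddCircle)‖ := norm_nsmul_le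
    _ ≤ n * gw n := by
      have := gw_nonneg n
      gcongr
      linarith
    _ = _ := by
      unfold gw
      have := log_succ_pos hn
      field_simp

lemma transfer {d : ℕ} (p : (Fin d → UnitAddCircle) → Prop)
    (h : ∀ᵐ β ∂(volume : Measure (Fin d → UnitAddCircle)), p β) :
    ∀ᵐ α ∂(volume : Measure (Fin d → ℝ)), p (fun i => (α i : UnitAddCircle)) := by
  have hcov : (⋃ k : Fin d → ℤ, Set.univ.pi fun i => Set.Ioc (k i : ℝ) ((k i : ℝ) + 1)) =
      (Set.univ : Set (Fin d → ℝ)) := by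
    rw [Set.eq_univ_iff_forall]
    intro α
    rw [Set.mem_iUnion]
    refine ⟨fun i => ⌈α i⌉ - 1, fun i _ => ?_⟩
    have h1 := Int.ceil_lt_add_one (α i)
    have h2 := Int.le_ceil (α i)
    push_cast
    constructor <;> linarith
  rw [← Measure.restrict_univ (μ := (volume : Measure (Fin d → ℝ))), ← hcov,
    ae_restrict_iUnion_eq, eventually_iSup]
  intro k
  have hmp : MeasurePreserving (fun (α : Fin d → ℝ) i => (α i : UnitAddCircle))
      (Measure.pi fun i => (volume : Measure ℝ).restrict (Set.Ioc (k i : ℝ) ((k i : ℝ) + 1)))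
      (Measure.pi fun _ => (volume : Measure UnitAddCircle)) :=
    measurePreserving_pi _ _ fun i => UnitAddCircle.measurePreserving_mk (k i : ℝ)
  rw [volume_pi, Measure.restrict_pi_pi]
  exact hmp.quasiMeasurePreserving.ae h

/-- The character `β ↦ m·β`. -/
def charHom {d : ℕ} (m : Fin d → ℤ) : (Fin d → UnitAddCircle) →+ UnitAddCircle where
  toFun β := ∑ i, m i • β i
  map_zero' := by simp
  map_add' x y := by simp [smul_add, Finset.sum_add_distrib]

lemma charHom_cont {d : ℕ} (m : Fin d → ℤ) : Continuous (charHom m) := by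
  change Continuous (fun β : Fin d → UnitAddCircle => ∑ i, m i • β i)
  fun_prop

lemma charHom_pair {d : ℕ} (m m' : Fin d → ℤ) (i j : Fin d)
    (hD : m i * m' j - m j * m' i ≠ 0) :
    MeasurePreserving ((charHom m).prod (charHom m'))
      (volume : Measure (Fin d → UnitAddCircle)) (volume.prod volume) := by
  have hij : i ≠ j := by rintro rfl; apply hD; ring
  apply AddMonoidHom.measurePreserving
  · exact (charHom_cont m).prodMk (charHom_cont m')
  · rintro ⟨u, v⟩
    induction u using QuotientAddGroup.induction_on with
    | H x =>
    induction v using QuotientAddGroup.induction_on with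
    | H y =>
    set D : ℝ := (m i : ℝ) * m' j - m j * m' i with hDd
    have hD' : D ≠ 0 := by rw [hDd]; exact_mod_cast hD
    set s : ℝ := (m' j * x - m j * y) / D with hs
    set t : ℝ := (m i * y - m' i * x) / D with ht
    refine ⟨Pi.single i (s : UnitAddCircle) + Pi.single j (t : UnitAddCircle), ?_⟩
    have key : ∀ n : Fin d → ℤ, charHom n (Pi.single i (s : UnitAddCircle) + Pi.single j (t : UnitAddCircle))
        = ((n i * s + n j * t : ℝ) : UnitAddCircle) := by
      intro n
      have hsing : ∀ (k : Fin d) (w : UnitAddCircle), charHom n (Pi.single k w) = n k • w := by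
        intro k w
        change ∑ l, n l • (Pi.single k w : Fin d → UnitAddCircle) l = _
        rw [Finset.sum_eq_single k]
        · simp
        · intro l _ hl; simp [hl]
        · simp
      rw [map_add, hsing, hsing, AddCircle.coe_add, ← zsmul_eq_mul, ← zsmul_eq_mul,
        AddCircle.coe_zsmul, AddCircle.coe_zsmul]
    rw [AddMonoidHom.prod_apply, key, key]
    have e1 : (m i * s + m j * t : ℝ) = x := by
      rw [hs, ht]; field_simp; rw [hDd]; ring
    have e2 : (m' i * s + m' j * t : ℝ) = y := by
      rw [hs, ht]; field_simp; rw [hDd]; ring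
    rw [e1, e2]
  · rw [measure_univ, measure_univ]

lemma charHom_real {d : ℕ} (m : Fin d → ℤ) (hd : MeasurePreserving (charHom m)
      (volume : Measure (Fin d → UnitAddCircle)) volume) {a : ℝ} (ha : 0 ≤ a) (ha' : 2 * a ≤ 1) :
    (volume : Measure (Fin d → UnitAddCircle)).real (charHom m ⁻¹' Metric.closedBall 0 a) = 2 * a := by
  rw [Measure.real, hd.measure_preimage Metric.isClosed_closedBall.measurableSet.nullMeasurableSet]
  exact real_closedBall 0 ha ha'

lemma charHom_pair_real {d : ℕ} (m m' : Fin d → ℤ) (i j : Fin d)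
    (hD : m i * m' j - m j * m' i ≠ 0) {a b : ℝ} (ha : 0 ≤ a) (ha' : 2 * a ≤ 1)
    (hb : 0 ≤ b) (hb' : 2 * b ≤ 1) :
    (volume : Measure (Fin d → UnitAddCircle)).real
      (charHom m ⁻¹' Metric.closedBall 0 a ∩ charHom m' ⁻¹' Metric.closedBall 0 b)
      = (2 * a) * (2 * b) := by
  have hmp := charHom_pair m m' i j hD
  have e : charHom m ⁻¹' Metric.closedBall 0 a ∩ charHom m' ⁻¹' Metric.closedBall 0 b =
      ((charHom m).prod (charHom m')) ⁻¹' (Metric.closedBall 0 a ×ˢ Metric.closedBall 0 b) := rfl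
  rw [e, Measure.real, hmp.measure_preimage
    (Metric.isClosed_closedBall.measurableSet.prod Metric.isClosed_closedBall.measurableSet).nullMeasurableSet,
    Measure.prod_prod, ENNReal.toReal_mul]
  exact congrArg₂ (· * ·) (real_closedBall 0 ha ha') (real_closedBall 0 hb hb')

lemma charHom_mp {k : ℕ} (m : Fin (k+2) → ℤ) (h0 : m 0 ≠ 0) :
    MeasurePreserving (charHom m) (volume : Measure (Fin (k+2) → UnitAddCircle)) volume := by
  have h := charHom_pair m (Pi.single 1 1) 0 1 (by simpa using h0)
  exact measurePreserving_fst.comp h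

/-- Index vectors. -/
def vecOf {k : ℕ} (i : Σ _ : ℕ, ℕ × (Fin k → ℕ)) : Fin (k+2) → ℤ :=
  fun l => ((Fin.cons i.1 (Fin.cons i.2.1 i.2.2) : Fin (k+2) → ℕ) l : ℤ)

lemma vecOf_zero {k : ℕ} (i : Σ _ : ℕ, ℕ × (Fin k → ℕ)) : vecOf i 0 = i.1 := rfl
lemma vecOf_one {k : ℕ} (i : Σ _ : ℕ, ℕ × (Fin k → ℕ)) : vecOf i 1 = i.2.1 := rfl
lemma vecOf_ss {k : ℕ} (i : Σ _ : ℕ, ℕ × (Fin k → ℕ)) (l : Fin k) :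
    vecOf i l.succ.succ = i.2.2 l := rfl

lemma vecOf_inj {k : ℕ} : Function.Injective (vecOf (k := k)) := by
  rintro ⟨n, a, b⟩ ⟨n', a', b'⟩ h
  have g0 : (n:ℤ) = (n':ℤ) := congrFun h 0
  have g1 : (a:ℤ) = (a':ℤ) := congrFun h 1
  have h0 : n = n' := by exact_mod_cast g0
  have h1 : a = a' := by exact_mod_cast g1
  have h2 : b = b' := by
    funext l
    have g2 : (b l : ℤ) = (b' l : ℤ) := congrFun h l.succ.succ
    exact_mod_cast g2
  subst h0 h1 h2
  rfl

lemma ae_good_two (k : ℕ) : ∀ᵐ β ∂(volume : Measure (Fin (k+2) → UnitAddCircle)), GoodRel β := by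
  classical
  set δ : ℕ → ℝ := fun n => 1 / ((n:ℝ) ^ (k+2) * Real.log (n + 1)) / 4 with hδ
  have hδpos : ∀ n, 1 ≤ n → 0 < δ n := fun n hn => by
    have := log_succ_pos hn
    have : (0:ℝ) < n := by exact_mod_cast hn
    simp only [hδ]; positivity
  have hδ1 : ∀ n, 1 ≤ n → 2 * δ n ≤ 1 := fun n hn => by
    have h := half_lt_log_succ hn
    have h1 : (1:ℝ) ≤ (n:ℝ) ^ (k+2) := one_le_pow₀ (by exact_mod_cast hn)
    have : 1 / ((n:ℝ) ^ (k+2) * Real.log (n + 1)) ≤ 2 := by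
      rw [div_le_iff₀ (by positivity)]
      nlinarith
    simp only [hδ]; linarith
  let E : (Σ _ : ℕ, ℕ × (Fin k → ℕ)) → Set (Fin (k+2) → UnitAddCircle) :=
    fun i => charHom (vecOf i) ⁻¹' Metric.closedBall 0 (δ i.1)
  let R : ℕ → Finset (ℕ × (Fin k → ℕ)) := fun n =>
    ((Finset.range n).filter (fun a => n.Coprime a)) ×ˢ Fintype.piFinset (fun _ => Finset.range n)
  let S : ℕ → Finset (Σ _ : ℕ, ℕ × (Fin k → ℕ)) := fun N => (Icc 1 N).sigma R
  have hS : ∀ N, ∀ i ∈ S N, 1 ≤ i.1 ∧ i.2.1 < i.1 ∧ i.1.Coprime i.2.1 ∧ ∀ l, i.2.2 l < i.1 := by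
    intro N i hi
    simp only [S, R, Finset.mem_sigma, Finset.mem_Icc, Finset.mem_product, Finset.mem_filter,
      Finset.mem_range, Fintype.mem_piFinset] at hi
    exact ⟨hi.1.1, hi.2.1.1, hi.2.1.2, hi.2.2⟩
  have hEr : ∀ N, ∀ i ∈ S N, (volume : Measure (Fin (k+2) → UnitAddCircle)).real (E i) = 2 * δ i.1 := by
    intro N i hi
    have h := hS N i hi
    refine charHom_real _ (charHom_mp _ ?_) (hδpos _ h.1).le (hδ1 _ h.1)
    rw [vecOf_zero]
    have := h.1
    exact_mod_cast (by omega : i.1 ≠ 0)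
  have hM : ∀ N, ∑ i ∈ S N, (volume : Measure (Fin (k+2) → UnitAddCircle)).real (E i) =
      (1 / 2) * ∑ n ∈ Icc 1 N, (Nat.totient n : ℝ) * gw n := by
    intro N
    rw [Finset.sum_congr rfl (hEr N)]
    simp only [S, Finset.sum_sigma]
    rw [Finset.mul_sum]
    refine Finset.sum_congr rfl fun n hn => ?_
    rw [Finset.mem_Icc] at hn
    rw [Finset.sum_const, nsmul_eq_mul]
    have hc : (R n).card = Nat.totient n * n ^ k := by
      simp only [R]
      rw [Finset.card_product, Nat.totient_eq_card_coprime, Fintype.card_piFinset]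
      simp
    rw [hc]
    have := log_succ_pos hn.1
    have : (0:ℝ) < n := by exact_mod_cast hn.1
    simp only [hδ, gw]
    push_cast
    field_simp
    ring
  obtain ⟨G, hGm, hG, hG1⟩ := kochen_stone (volume : Measure (Fin (k+2) → UnitAddCircle)) E
    (fun i => (charHom_cont _).measurable Metric.isClosed_closedBall.measurableSet) S 1 (by norm_num)
    (by
      simp_rw [hM]
      exact tendsto_sum_totient.const_mul_atTop (by norm_num))
    (by
      intro N
      rw [one_mul, sq, Finset.sum_mul_sum]
      refine Finset.sum_le_sum fun i hi => ?_
      have h2 : ∀ j ∈ (S N).erase i, (volume : Measure (Fin (k+2) → UnitAddCircle)).real (E i ∩ E j)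
          = (volume : Measure (Fin (k+2) → UnitAddCircle)).real (E i) *
            (volume : Measure (Fin (k+2) → UnitAddCircle)).real (E j) := by
        intro j hj
        rw [Finset.mem_erase] at hj
        rw [hEr N i hi, hEr N j hj.2]
        have hi' := hS N i hi
        have hj' := hS N j hj.2
        have : ∃ l l', vecOf i l * vecOf j l' - vecOf i l' * vecOf j l ≠ 0 := by
          by_contra! hcon
          have h01 := hcon 0 1
          rw [vecOf_zero, vecOf_zero, vecOf_one, vecOf_one, sub_eq_zero] at h01
          have h01' : i.1 * j.2.1 = i.2.1 * j.1 := by exact_mod_cast h01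
          have d1 : i.1 ∣ j.1 := hi'.2.2.1.dvd_of_dvd_mul_left ⟨_, h01'.symm⟩
          have d2 : j.1 ∣ i.1 := hj'.2.2.1.dvd_of_dvd_mul_right ⟨i.2.1, by rw [h01', mul_comm]⟩
          have hn : i.1 = j.1 := Nat.dvd_antisymm d1 d2
          apply hj.1
          apply vecOf_inj
          funext l
          have := hcon 0 l
          rw [vecOf_zero, vecOf_zero, ← hn, mul_comm (vecOf i l), ← mul_sub] at this
          rcases mul_eq_zero.mp this with h | h
          · have := hi'.1
            have h' : i.1 = 0 := by exact_mod_cast h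
            omega
          · linarith
        obtain ⟨l, l', hl⟩ := this
        exact charHom_pair_real _ _ l l' hl (hδpos _ hi'.1).le (hδ1 _ hi'.1) (hδpos _ hj'.1).le
          (hδ1 _ hj'.1)
      rw [Finset.sum_congr rfl h2]
      exact Finset.sum_le_sum_of_subset_of_nonneg (Finset.erase_subset _ _)
        (fun _ _ _ => mul_nonneg measureReal_nonneg measureReal_nonneg))
  have hGae : ∀ᵐ β ∂(volume : Measure (Fin (k+2) → UnitAddCircle)), β ∈ G := by
    refine (mem_ae_iff_prob_eq_one hGm).mpr ?_
    have h1 : (volume : Measure (Fin (k+2) → UnitAddCircle)).real G = 1 :=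
      le_antisymm measureReal_le_one (by simpa using hG1)
    have h2 := ofReal_measureReal (μ := (volume : Measure (Fin (k+2) → UnitAddCircle))) (s := G)
    rw [← h2, h1, ENNReal.ofReal_one]
  filter_upwards [hGae] with β hβ
  refine ((hG β hβ).image vecOf_inj.injOn).mono ?_
  rintro _ ⟨i, ⟨⟨N, hN⟩, hiE⟩, rfl⟩
  obtain ⟨h1, h2, h3, h4⟩ := hS N i hN
  refine ⟨?_, i.1, h1, ?_, ?_⟩
  · intro h
    have this : (i.1:ℤ) = 0 := congrFun h 0
    have h' : i.1 = 0 := by exact_mod_cast this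
    omega
  · intro l
    refine Fin.cases ?_ (fun l => ?_) l
    · rw [vecOf_zero]; simp
    · refine Fin.cases ?_ (fun l => ?_) l
      · change |vecOf i 1| ≤ _
        rw [vecOf_one]; simp; omega
      · rw [vecOf_ss]; simp; exact (h4 l).le
  · have h5 : ‖charHom (vecOf i) β‖ ≤ δ i.1 := by
      simpa [E] using hiE
    have h6 := hδpos _ h1
    refine le_trans h5 ?_
    simp only [hδ] at h6 ⊢
    linarith

lemma final_of_good (d : ℕ) (hd : 0 < d) (ϑ : ℝ) (hϑ : 0 < ϑ) (α : Fin d → ℝ)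
    (h : GoodRel (fun i => (α i : UnitAddCircle))) :
      ∑' m : {m : Fin d → ℤ // m ≠ 0},
        (ENNReal.ofReal (znorm m.1)) ^ (-((d : ℝ) * ϑ)) *
          (ENNReal.ofReal (Real.log (1 + znorm m.1))) ^ (-ϑ) *
          (ENNReal.ofReal (dnint (∑ i, (m.1 i : ℝ) * α i))) ^ (-ϑ) = ⊤ := by
  by_contra hne
  have hdp : (0:ℝ) < d := by exact_mod_cast hd
  set C : ℝ := (d:ℝ) ^ d * d with hC
  have hCpos : 0 < C := by positivity
  have hfin := ENNReal.finite_const_le_of_tsum_ne_top hne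
    (ε := ENNReal.ofReal C ^ (-ϑ)) (by
      rw [ENNReal.ofReal_rpow_of_pos hCpos]
      exact (ENNReal.ofReal_pos.mpr (by positivity)).ne')
  apply h
  refine (hfin.image Subtype.val).subset ?_
  rintro m ⟨hm0, n, hn, hmn, hb⟩
  refine ⟨⟨m, hm0⟩, ?_, rfl⟩
  simp only [Set.mem_ofPred_eq]
  have hnp : (1:ℝ) ≤ n := by exact_mod_cast hn
  have hlog := log_succ_pos hn
  -- norm bounds
  have hzpos : 0 < znorm m := by
    unfold znorm
    apply Real.sqrt_pos.mpr
    obtain ⟨i, hi⟩ := Function.ne_iff.mp hm0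
    refine Finset.sum_pos' (fun i _ => sq_nonneg _) ⟨i, Finset.mem_univ _, ?_⟩
    have : (m i : ℝ) ≠ 0 := by exact_mod_cast hi
    positivity
  have hd1 : (1:ℝ) ≤ d := by exact_mod_cast hd
  have hzle : znorm m ≤ d * n := by
    unfold znorm
    rw [Real.sqrt_le_left (by positivity)]
    calc ∑ i, (m i : ℝ) ^ 2 ≤ ∑ _i : Fin d, (n:ℝ) ^ 2 := by
          refine Finset.sum_le_sum fun i _ => ?_
          rw [sq_le_sq, abs_of_nonneg (by positivity : (0:ℝ) ≤ n)]
          exact_mod_cast hmn i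
      _ = d * (n:ℝ) ^ 2 := by simp
      _ ≤ (d * n) ^ 2 := by
          rw [mul_pow]
          gcongr
          nlinarith
  have hlz : Real.log (1 + znorm m) ≤ d * Real.log (n + 1) := by
    rw [← Real.log_pow]
    apply Real.log_le_log (by linarith)
    have := one_add_mul_le_pow (a := (n:ℝ)) (by linarith) d
    rw [add_comm (n:ℝ) 1]
    linarith
  have hlzpos : 0 < Real.log (1 + znorm m) := Real.log_pos (by linarith)
  have hdn : dnint (∑ i, (m i : ℝ) * α i) ≤ 1 / ((n:ℝ) ^ d * Real.log (n + 1)) := by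
    refine le_trans (le_of_eq ?_) hb
    unfold dnint
    rw [← UnitAddCircle.norm_eq]
    congr 1
    have : ((∑ i, (m i : ℝ) * α i : ℝ) : UnitAddCircle) = ∑ i, ((m i * α i : ℝ) : UnitAddCircle) :=
      map_sum (QuotientAddGroup.mk' (AddSubgroup.zmultiples (1:ℝ))) _ _
    rw [this]
    refine Finset.sum_congr rfl fun i _ => ?_
    rw [← zsmul_eq_mul, AddCircle.coe_zsmul]
  set t : ℝ := 1 / ((n:ℝ) ^ d * Real.log (n + 1)) with ht
  have htpos : 0 < t := by positivity
  have hlast : ENNReal.ofReal t ^ (-ϑ) ≤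
      (ENNReal.ofReal (dnint (∑ i, (m i : ℝ) * α i))) ^ (-ϑ) := by
    rw [ENNReal.rpow_neg, ENNReal.rpow_neg, ENNReal.inv_le_inv]
    exact ENNReal.rpow_le_rpow (ENNReal.ofReal_le_ofReal hdn) hϑ.le
  refine le_trans ?_ (mul_le_mul_right hlast _)
  rw [ENNReal.ofReal_rpow_of_pos hCpos, ENNReal.ofReal_rpow_of_pos hzpos,
    ENNReal.ofReal_rpow_of_pos hlzpos, ENNReal.ofReal_rpow_of_pos htpos,
    ← ENNReal.ofReal_mul (by positivity), ← ENNReal.ofReal_mul (by positivity)]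
  apply ENNReal.ofReal_le_ofReal
  have e : znorm m ^ (-((d:ℝ) * ϑ)) = (znorm m ^ d) ^ (-ϑ) := by
    rw [← Real.rpow_natCast (znorm m) d, ← Real.rpow_mul hzpos.le]
    congr 1; ring
  rw [e, ← Real.mul_rpow (by positivity) (by positivity),
    ← Real.mul_rpow (by positivity) (by positivity)]
  apply Real.rpow_le_rpow_of_nonpos (by positivity) _ (by linarith)
  calc znorm m ^ d * Real.log (1 + znorm m) * t
      ≤ (d * n) ^ d * (d * Real.log (n + 1)) * t := by gcongr
    _ = C := by
      rw [ht, hC, mul_pow]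
      field_simp
/-- Lemma 2.6 (ii): for every `ϑ > 0` and almost every `α ∈ ℝ^d` the series
`∑_{m ≠ 0} |m|^{-dϑ} log^{-ϑ}(1+|m|) ‖m·α‖^{-ϑ}` diverges
(terms with `‖m·α‖ = 0` count as `+∞`). -/
theorem stmt_15 (d : ℕ) (hd : 0 < d) (ϑ : ℝ) (hϑ : 0 < ϑ) :
    ∀ᵐ α ∂(volume : Measure (Fin d → ℝ)),
      ∑' m : {m : Fin d → ℤ // m ≠ 0},
        (ENNReal.ofReal (znorm m.1)) ^ (-((d : ℝ) * ϑ)) *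
          (ENNReal.ofReal (Real.log (1 + znorm m.1))) ^ (-ϑ) *
          (ENNReal.ofReal (dnint (∑ i, (m.1 i : ℝ) * α i))) ^ (-ϑ) = ⊤ := by
  have hg : ∀ᵐ β ∂(volume : Measure (Fin d → UnitAddCircle)), GoodRel β := by
    rcases d with _ | _ | k
    · omega
    · exact ae_good_one
    · exact ae_good_two k
  filter_upwards [transfer _ hg] with α hα
  exact final_of_good d hd ϑ hϑ α hα
end
end

section
/- For every ϑ > 0 there exist non-negative weights Φ(N,n), defined for positive integers N and integers n, such that for every N the function n ↦ Φ(N,n) has finite support and ∑_{n∈ℤ} Φ(N,n) = 1, and there exist constants K > H > 0 such that for every positive integer N and every t ∈ ℝ, H(1 + N‖t‖)^{−ϑ} ≤ ∑_{n∈ℤ} Φ(N,n) e^{2πint} ≤ K(1 + N‖t‖)^{−ϑ}. In particular the sum ∑_{n∈ℤ} Φ(N,n) e^{2πint} is real and positive for all t. -/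
open MeasureTheory Filter Finset
open scoped Real ENNReal Topology BigOperators

noncomputable section

/-- `f` is a trigonometric polynomial with nonnegative coefficients. -/
def GoodK (f : ℝ → ℝ) : Prop :=
  ∃ φ : ℤ →₀ ℝ, (∀ n, 0 ≤ φ n) ∧ ∀ t : ℝ,
    φ.sum (fun n a => (a : ℂ) * Complex.exp (2 * Real.pi * Complex.I * (n : ℂ) * (t : ℂ)))
      = (f t : ℂ)

lemma GoodK.const (c : ℝ) (hc : 0 ≤ c) : GoodK (fun _ => c) := by
  refine ⟨Finsupp.single 0 c, fun n => ?_, fun t => ?_⟩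
  · rw [Finsupp.single_apply]; split_ifs <;> simp [hc]
  · rw [Finsupp.sum_single_index] <;> simp

lemma GoodK.add {f g : ℝ → ℝ} (hf : GoodK f) (hg : GoodK g) : GoodK (fun t => f t + g t) := by
  obtain ⟨φ, h1, h2⟩ := hf
  obtain ⟨ψ, h3, h4⟩ := hg
  refine ⟨φ + ψ, fun n => add_nonneg (h1 n) (h3 n), fun t => ?_⟩
  rw [Finsupp.sum_add_index', h2, h4]
  · push_cast; rfl
  · simp
  · intro a b c; push_cast; ring

lemma GoodK.smul {f : ℝ → ℝ} (c : ℝ) (hc : 0 ≤ c) (hf : GoodK f) : GoodK (fun t => c * f t) := by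
  obtain ⟨φ, h1, h2⟩ := hf
  refine ⟨c • φ, fun n => mul_nonneg hc (h1 n), fun t => ?_⟩
  rw [Finsupp.sum_smul_index' (by simp)]
  push_cast
  rw [← h2, Finsupp.sum, Finsupp.sum, Finset.mul_sum]
  refine Finset.sum_congr rfl fun n _ => ?_
  simp [mul_assoc]

lemma mapDomain_nonneg_aux (φ : ℤ →₀ ℝ) (h : ∀ n, 0 ≤ φ n) (k n : ℤ) :
    0 ≤ Finsupp.mapDomain (fun m => m + k) φ n := by
  have := Finsupp.mapDomain_apply (add_left_injective k) φ (n - k)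
  simp only [sub_add_cancel] at this
  rw [this]; exact h _

lemma GoodK.mul_cos {f : ℝ → ℝ} (hf : GoodK f) :
    GoodK (fun t => f t * Real.cos (2 * Real.pi * t)) := by
  obtain ⟨φ, h1, h2⟩ := hf
  have key : ∀ (k : ℤ) (t : ℝ), (Finsupp.mapDomain (fun m => m + k) φ).sum
      (fun n a => (a : ℂ) * Complex.exp (2 * Real.pi * Complex.I * (n : ℂ) * (t : ℂ)))
      = f t * Complex.exp (2 * Real.pi * Complex.I * (k : ℂ) * (t : ℂ)) := by
    intro k t
    rw [Finsupp.sum_mapDomain_index, ← h2, Finsupp.sum, Finsupp.sum, Finset.sum_mul]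
    · refine Finset.sum_congr rfl fun n _ => ?_
      rw [mul_assoc (φ n : ℂ), ← Complex.exp_add]
      congr 2
      push_cast; ring
    · simp
    · intro a b c; push_cast; ring
  have hadd : GoodK (fun t => f t * (2 * Real.cos (2 * Real.pi * t))) := by
    refine ⟨Finsupp.mapDomain (fun m => m + 1) φ + Finsupp.mapDomain (fun m => m + (-1)) φ,
      fun n => add_nonneg (mapDomain_nonneg_aux φ h1 _ _) (mapDomain_nonneg_aux φ h1 _ _),
      fun t => ?_⟩
    rw [Finsupp.sum_add_index', key, key]
    · push_cast
      rw [Complex.two_cos, mul_add]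
      congr 3
      · ring_nf
      · ring_nf
    · simp
    · intro a b c; push_cast; ring
  have := hadd.smul (1 / 2) (by norm_num)
  convert this using 2
  ring

lemma GoodK.cos_pow (k : ℕ) : GoodK (fun t => Real.cos (2 * Real.pi * t) ^ k) := by
  induction k with
  | zero => simpa using GoodK.const 1 zero_le_one
  | succ k ih => simpa [pow_succ] using ih.mul_cos

lemma GoodK.poly (c : ℕ → ℝ) (hc : ∀ k, 0 ≤ c k) (M : ℕ) :
    GoodK (fun t => ∑ k ∈ Finset.range M, c k * Real.cos (2 * Real.pi * t) ^ k) := by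
  induction M with
  | zero => simpa using GoodK.const 0 le_rfl
  | succ M ih => simpa [Finset.sum_range_succ] using ih.add ((GoodK.cos_pow M).smul (c M) (hc M))

lemma binom_coeff (s : ℝ) (hs : 0 < s) : ∃ c : ℕ → ℝ, (∀ k, 0 ≤ c k) ∧
    ∀ x : ℝ, |x| < 1 → HasSum (fun k => c k * x ^ k) (1 / (1 - x) ^ s) := by
  refine ⟨fun n => Ring.choose (s + n - 1) n, fun k => ?_, fun x hx => ?_⟩
  · have h := Ring.factorial_nsmul_multichoose_eq_ascPochhammer s k
    rw [Polynomial.ascPochhammer_smeval_eq_eval] at h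
    have h2 := ascPochhammer_pos k s hs
    rw [← h, nsmul_eq_mul] at h2
    have h3 : Ring.choose (s + k - 1) k = Ring.multichoose s k := by
      rw [Ring.choose]; congr 1; ring
    show 0 ≤ Ring.choose (s + k - 1) k
    rw [h3]
    exact (pos_of_mul_pos_right h2 (by positivity)).le
  · have := (Real.one_div_one_sub_rpow_hasFPowerSeriesOnBall_zero s).hasSum (y := x)
      (by simpa [Metric.mem_eball, edist_dist] using hx)
    simpa [FormalMultilinearSeries.ofScalars_apply_eq, mul_comm] using this

lemma core_aux (s : ℝ) (hs : 0 < s) (N : ℕ) (hN : 1 ≤ N) : ∃ f : ℝ → ℝ, GoodK f ∧ f 0 = 1 ∧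
    ∀ t, (1 / 3) * (1 + (N : ℝ) ^ 2 * Real.sin (Real.pi * t) ^ 2) ^ (-s) ≤ f t ∧
      f t ≤ 3 * (1 + (N : ℝ) ^ 2 * Real.sin (Real.pi * t) ^ 2) ^ (-s) := by
  obtain ⟨c, hc, hsum⟩ := binom_coeff s hs
  have hN' : (1 : ℝ) ≤ N := by exact_mod_cast hN
  set r : ℝ := (N : ℝ) ^ 2 / (2 + (N : ℝ) ^ 2) with hr
  have hr0 : 0 ≤ r := by positivity
  have h1r : 1 - r = 2 / (2 + (N : ℝ) ^ 2) := by rw [hr]; field_simp; ring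
  have h1r0 : 0 < 1 - r := by rw [h1r]; positivity
  have hr1 : |r| < 1 := by rw [abs_of_nonneg hr0]; linarith
  set F : ℝ → ℝ := fun x => 1 / (1 - x) ^ s with hF
  set δ : ℝ := 1 / 2 * (1 / (2 : ℝ) ^ s) with hδ
  have hδ0 : 0 < δ := by positivity
  have hev : ∀ᶠ M in atTop, F r - δ < ∑ k ∈ Finset.range M, c k * r ^ k :=
    (hsum r hr1).tendsto_sum_nat.eventually_const_lt (by simp only [hF]; linarith)
  obtain ⟨M, hM⟩ := hev.exists
  set P : ℝ → ℝ := fun x => ∑ k ∈ Finset.range M, c k * x ^ k with hP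
  have happ : ∀ x, |x| ≤ r → F x / 2 ≤ P x ∧ P x ≤ 3 / 2 * F x := by
    intro x hx
    have hx1 : |x| < 1 := by linarith
    have hb := abs_lt.1 hx1
    have hpow : ∀ k, |x ^ k| ≤ r ^ k := fun k => by
      rw [abs_pow]; exact pow_le_pow_left₀ (abs_nonneg x) hx k
    have hFx : 2 * δ ≤ F x := by
      simp only [hδ, hF]
      have : (1 - x) ^ s ≤ 2 ^ s := Real.rpow_le_rpow (by linarith) (by linarith) hs.le
      have h3 : 0 < (1 - x) ^ s := Real.rpow_pos_of_pos (by linarith) s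
      have := one_div_le_one_div_of_le h3 this
      linarith
    have e1 : P r - P x ≤ F r - F x := by
      have := sum_le_hasSum (Finset.range M) (fun k _ => ?_) ((hsum r hr1).sub (hsum x hx1))
      · simpa [hP, hF, Finset.sum_sub_distrib] using this
      · have := (abs_le.1 (hpow k)).2
        nlinarith [hc k]
    have e2 : P r + P x ≤ F r + F x := by
      have := sum_le_hasSum (Finset.range M) (fun k _ => ?_) ((hsum r hr1).add (hsum x hx1))
      · simpa [hP, hF, Finset.sum_add_distrib] using this
      · have := (abs_le.1 (hpow k)).1
        nlinarith [hc k]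
    constructor <;> linarith
  have hFr : 0 < F r := by simp only [hF]; positivity
  have hPr := happ r (by rw [abs_of_nonneg hr0])
  have hPr0 : 0 < P r := by linarith [hPr.1]
  refine ⟨fun t => (1 / P r) * P (r * Real.cos (2 * Real.pi * t)), ?_, ?_, fun t => ?_⟩
  · have := (GoodK.poly (fun k => c k * r ^ k) (fun k => mul_nonneg (hc k) (pow_nonneg hr0 k)) M).smul
      (1 / P r) (by positivity)
    convert this using 3
    simp only [hP, mul_pow, mul_assoc]
  · simp [hPr0.ne']
  · set x := r * Real.cos (2 * Real.pi * t) with hx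
    have hxr : |x| ≤ r := by
      rw [hx, abs_mul, abs_of_nonneg hr0]
      exact mul_le_of_le_one_right hr0 (Real.abs_cos_le_one _)
    set g := 1 + (N : ℝ) ^ 2 * Real.sin (Real.pi * t) ^ 2 with hg
    have hg0 : 0 < g := by positivity
    have h1x : 1 - x = (1 - r) * g := by
      have : Real.cos (2 * Real.pi * t) = 1 - 2 * Real.sin (Real.pi * t) ^ 2 := by
        rw [mul_assoc, Real.cos_two_mul, Real.cos_sq']; ring
      rw [hx, this, h1r, hg, hr]; field_simp; ring
    have hFx : F x = F r * g ^ (-s) := by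
      simp only [hF]
      rw [h1x, Real.mul_rpow h1r0.le hg0.le, Real.rpow_neg hg0.le]
      field_simp
    have h := happ x hxr
    rw [hFx] at h
    have hgs : 0 < g ^ (-s) := Real.rpow_pos_of_pos hg0 _
    have hGoal : (1 / P r) * P x = P x / P r := by ring
    change 1 / 3 * g ^ (-s) ≤ 1 / P r * P x ∧ 1 / P r * P x ≤ 3 * g ^ (-s)
    rw [hGoal, le_div_iff₀ hPr0, div_le_iff₀ hPr0]
    constructor
    · have := mul_le_mul_of_nonneg_right hPr.2 hgs.le
      linarith
    · have := mul_le_mul_of_nonneg_right hPr.1 hgs.le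
      linarith

lemma sin_dnint (t : ℝ) : Real.sin (Real.pi * t) ^ 2 = Real.sin (Real.pi * dnint t) ^ 2 := by
  have h1 : ∀ y : ℝ, Real.sin (Real.pi * |y|) ^ 2 = Real.sin (Real.pi * y) ^ 2 := by
    intro y
    rcases abs_choice y with h | h <;> rw [h]
    simp
  rw [dnint, h1, mul_sub, mul_comm Real.pi (round t : ℝ), Real.sin_sub_int_mul_pi, mul_pow]
  have : ((-1 : ℝ) ^ (round t)) ^ 2 = 1 := by
    rw [← zpow_natCast, ← zpow_mul, mul_comm, zpow_mul]; simp
  rw [this, one_mul]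

lemma g_bounds (N : ℕ) (t : ℝ) :
    (1 + (N : ℝ) * dnint t) ^ 2 / 2 ≤ 1 + (N : ℝ) ^ 2 * Real.sin (Real.pi * t) ^ 2 ∧
    1 + (N : ℝ) ^ 2 * Real.sin (Real.pi * t) ^ 2 ≤ 16 * (1 + (N : ℝ) * dnint t) ^ 2 := by
  rw [sin_dnint]
  have hd0 : 0 ≤ dnint t := abs_nonneg _
  have hd1 : dnint t ≤ 1 / 2 := abs_sub_round t
  set d := dnint t
  have hpi := Real.pi_pos
  have a1 : 2 * d ≤ Real.sin (Real.pi * d) := by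
    have := Real.mul_le_sin (x := Real.pi * d) (by positivity) (by nlinarith)
    have e : 2 / Real.pi * (Real.pi * d) = 2 * d := by field_simp
    linarith
  have a2 : Real.sin (Real.pi * d) ≤ 4 * d :=
    (Real.sin_le (by positivity)).trans (by nlinarith [Real.pi_le_four])
  set S := Real.sin (Real.pi * d)
  have hN : (0 : ℝ) ≤ N := by positivity
  have b1 : 2 * ((N : ℝ) * d) ≤ N * S := by nlinarith
  have b2 : (N : ℝ) * S ≤ 4 * (N * d) := by nlinarith
  have b0 : 0 ≤ (N : ℝ) * d := by positivity
  rw [← mul_pow]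
  set u := (N : ℝ) * d
  set v := (N : ℝ) * S
  constructor
  · nlinarith [sq_nonneg (u - 1)]
  · nlinarith

/-- Remark 3.1: for every `ϑ > 0` there exist non-negative weights whose kernel is real,
positive, and comparable to `(1+N‖t‖)^{-ϑ}` from above and below. -/
theorem stmt_19 (ϑ : ℝ) (hϑ : 0 < ϑ) :
    ∃ Φ : ℕ → ℤ → ℝ,
      (∀ (N : ℕ) (n : ℤ), 0 ≤ Φ N n) ∧
      (∀ N : ℕ, 1 ≤ N → (Function.support (Φ N)).Finite) ∧
      (∀ N : ℕ, 1 ≤ N → ∑' n : ℤ, Φ N n = 1) ∧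
      ∃ K H : ℝ, 0 < H ∧ H < K ∧
        ∀ N : ℕ, 1 ≤ N → ∀ t : ℝ,
          (kern (fun N n => ((Φ N n : ℝ) : ℂ)) N t).im = 0 ∧
          H * (1 + (N : ℝ) * dnint t) ^ (-ϑ)
            ≤ (kern (fun N n => ((Φ N n : ℝ) : ℂ)) N t).re ∧
          (kern (fun N n => ((Φ N n : ℝ) : ℂ)) N t).re
            ≤ K * (1 + (N : ℝ) * dnint t) ^ (-ϑ) := by
  have hs : 0 < ϑ / 2 := by positivity
  have H : ∀ N : ℕ, ∃ φ : ℤ →₀ ℝ, (∀ n, 0 ≤ φ n) ∧ (1 ≤ N → ∃ f : ℝ → ℝ, f 0 = 1 ∧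
      (∀ t : ℝ, φ.sum (fun n a =>
        (a : ℂ) * Complex.exp (2 * Real.pi * Complex.I * (n : ℂ) * (t : ℂ))) = (f t : ℂ)) ∧
      ∀ t, (1 / 3) * (1 + (N : ℝ) ^ 2 * Real.sin (Real.pi * t) ^ 2) ^ (-(ϑ / 2)) ≤ f t ∧
      f t ≤ 3 * (1 + (N : ℝ) ^ 2 * Real.sin (Real.pi * t) ^ 2) ^ (-(ϑ / 2))) := by
    intro N
    by_cases hN : 1 ≤ N
    · obtain ⟨f, ⟨φ, h1, h2⟩, h3, h4⟩ := core_aux (ϑ / 2) hs N hN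
      exact ⟨φ, h1, fun _ => ⟨f, h3, h2, h4⟩⟩
    · exact ⟨0, fun n => le_rfl, fun h => absurd h hN⟩
  choose φ hφ0 hφ using H
  have hkern : ∀ N t, kern (fun N n => ((φ N n : ℝ) : ℂ)) N t = (φ N).sum (fun n a =>
        (a : ℂ) * Complex.exp (2 * Real.pi * Complex.I * (n : ℂ) * (t : ℂ))) := by
    intro N t
    rw [kern, Finsupp.sum]
    refine tsum_eq_sum fun n hn => ?_
    rw [Finsupp.notMem_support_iff.1 hn]; simp
  refine ⟨fun N n => φ N n, hφ0, fun N _ => (φ N).hasFiniteSupport, fun N hN => ?_,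
    3 * 2 ^ (ϑ / 2), 1 / 3 * 16 ^ (-(ϑ / 2)), by positivity, ?_, fun N hN t => ?_⟩
  · obtain ⟨f, hf0, hf, -⟩ := hφ N hN
    have h := hf 0
    rw [tsum_eq_sum (s := (φ N).support) fun n hn => Finsupp.notMem_support_iff.1 hn]
    rw [hf0, Finsupp.sum] at h
    simp only [Complex.ofReal_zero, mul_zero, Complex.exp_zero, mul_one] at h
    exact_mod_cast h
  · have h1 : (16 : ℝ) ^ (-(ϑ / 2)) ≤ 1 :=
      Real.rpow_le_one_of_one_le_of_nonpos (by norm_num) (by linarith)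
    have h2 : (1 : ℝ) ≤ 2 ^ (ϑ / 2) := Real.one_le_rpow (by norm_num) hs.le
    linarith
  · obtain ⟨f, -, hf, hb⟩ := hφ N hN
    rw [hkern, hf, Complex.ofReal_im, Complex.ofReal_re]
    obtain ⟨g1, g2⟩ := g_bounds N t
    have hu : 0 < 1 + (N : ℝ) * dnint t := by
      have : 0 ≤ dnint t := abs_nonneg _
      positivity
    set u := 1 + (N : ℝ) * dnint t
    set g := 1 + (N : ℝ) ^ 2 * Real.sin (Real.pi * t) ^ 2
    have hg : 0 < g := lt_of_lt_of_le (by positivity) g1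
    have hu2 : (u ^ 2) ^ (-(ϑ / 2)) = u ^ (-ϑ) := by
      rw [← Real.rpow_natCast, ← Real.rpow_mul hu.le]; congr 1; push_cast; ring
    have c1 : g ^ (-(ϑ / 2)) ≤ 2 ^ (ϑ / 2) * u ^ (-ϑ) := by
      have := Real.rpow_le_rpow_of_nonpos (by positivity) g1 (by linarith : -(ϑ / 2) ≤ 0)
      rw [Real.div_rpow (by positivity) (by norm_num), hu2, Real.rpow_neg (x := 2) (by norm_num),
        div_inv_eq_mul] at this
      linarith
    have c2 : 16 ^ (-(ϑ / 2)) * u ^ (-ϑ) ≤ g ^ (-(ϑ / 2)) := by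
      have := Real.rpow_le_rpow_of_nonpos hg g2 (by linarith : -(ϑ / 2) ≤ 0)
      rwa [Real.mul_rpow (by norm_num) (by positivity), hu2] at this
    refine ⟨rfl, ?_, ?_⟩
    · linarith [(hb t).1]
    · linarith [(hb t).2]
end
end
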